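/- Let p be a prime with p ≡ 1 (mod 8) and k* = ℚ(√2, √p, i). Then the 2-rank of Cl(k*), i.e. dim_{𝔽₂}(Cl(k*)/Cl(k*)²), equals 2 or 3; and it equals 3 if and only if (2/p)₄ = (p/2)₄ = 1. -/

import Mathlib

/- STATEMENT 16: Let p ≡ 1 (mod 8) be prime and k* = ℚ(√2, √p, i). The 2-rank of Cl(k*)
equals 2 or 3 (i.e. the elementary abelian quotient Cl(k*)/Cl(k*)² has order 4 or 8),
and it equals 3 iff (2/p)₄ = (p/2)₄ = 1. -/

open Complex NumberField IntermediateField nonZeroDivisors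

noncomputable section

/-- k* = ℚ(√2, √p, i) as a subfield of ℂ. -/
def kstar (p : ℕ) : IntermediateField ℚ ℂ :=
  ℚ⟮(Real.sqrt 2 : ℂ), (Real.sqrt p : ℂ), (Complex.I : ℂ)⟯

/-- The quotient of the class group of k* by its subgroup of squares; its
𝔽₂-dimension is the 2-rank of Cl(k*). -/
def clModSq (p : ℕ) : Type _ :=
  ClassGroup (𝓞 (kstar p)) ⧸
    (powMonoidHom 2 : ClassGroup (𝓞 (kstar p)) →* ClassGroup (𝓞 (kstar p))).range

/-!
Write `R = ℤ[ζ₈]`, a principal ideal domain, and let `S` be the ring of integers of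
`k* = ℚ(ζ₈, √p)`, with the relative conjugation `y ↦ y'` and the relative norm `N`. As
`p ≡ 1 (mod 8)`, the prime `p` splits into four primes of `R`; these ramify in `S`, and no other
prime does. The quotient `Cl(S)/Cl(S)²` is as large as the two-torsion of `Cl(S)`. It is bounded
from above as two-torsion and from below as a quotient.

*Upper bound.* If `I² = (a)`, then `I' = β I` with `β = x / a`, where `(x) = I I'` with `x ∈ R`,
and `N β` is a unit `u` of `R`. When `u` is the norm of a unit, Hilbert 90 makes `I` equivalent to
an ambiguous ideal, hence to a product of ramified primes. The relations between the classes of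
ramified primes come from units of norm one modulo those of the form `η / η'`, and these are counted
by the Herbrand quotient of the units. Together this gives `|Cl(S)[2]| * [Rˣ : M] ≤ 8` for every
group `M` of units containing all the `u` that occur. The choice `M = Rˣ` bounds the order by `8`.
Since `u` is a norm from `k*`, it is a square modulo every ramified prime, so `M` may also be taken
to be the group of units that are squares modulo one prime above `p`. The units of `R` are generated
by `ζ₈` and `1 + √2` modulo squares, so the bound improves to `4` unless these two are squares
modulo `p`.

*Lower bound.* Relative norms of ideals of `S`, taken modulo units and norms from `k*`, separate
ideal classes modulo squares. There are primes `q₁ ≡ 5` and `q₂ ≡ 3 (mod 8)`, both nonresidues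
modulo `p`, and factors `x₁ = a₁ + b₁ i` of `q₁` and `x₂ = a₂ + b₂ √-2` of `q₂`; the elements `x₁`,
`x₂` and `q₂` all generate relative norms of ideals. Let `ψ_g : R → 𝔽_p` send `ζ₈` to `g`. Norms
from `k*` become squares under `ψ_g`, and units do so under `ψ_g ψ_{g³}` and `ψ_g ψ_{-g}`. As
`ζ₈ ↦ ζ₈³` sends `i` to `-i` and fixes `√-2`, and `ζ₈ ↦ -ζ₈` sends `√-2` to `-√-2`, the quadratic
characters of `ψ_g ψ_{g³}`, `ψ_g ψ_{-g}`, `ψ_g` form a triangular matrix on `x₁`, `x₂`, `q₂`, with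
diagonal entries the symbols of `q₁`, `q₂`, `q₂`. So `x₁` and `x₂` are independent, and all three
are if every unit is a square under `ψ_g`.

Thus the order is `8` if `ζ₈` and `1 + √2` are squares modulo `p`, and `4` otherwise; this condition
amounts to `(2/p)₄ = (p/2)₄ = 1`.
-/

/-! ### Quadratic extensions of rings -/

/-- A quadratic extension of rings `S / R`, given by its conjugation: a nontrivial involution of the
`R`-algebra `S` whose fixed elements come from `R`. It stands for the rings of integers of a
quadratic extension of number fields together with the nontrivial automorphism. -/
structure QuadraticConj (R S : Type*) [CommRing R] [CommRing S] [Algebra R S] where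
  conj : S ≃ₐ[R] S
  conj_conj : ∀ y, conj (conj y) = y
  exists_algebraMap_eq : ∀ y, conj y = y → ∃ r, algebraMap R S r = y
  exists_conj_ne : ∃ y, conj y ≠ y

namespace QuadraticConj

section Norm

variable {R S : Type*} [CommRing R] [CommRing S] [Algebra R S] (σ : QuadraticConj R S)

theorem exists_algebraMap_eq_add_conj (y : S) : ∃ r, algebraMap R S r = y + σ.conj y :=
  σ.exists_algebraMap_eq _ (by rw [map_add, σ.conj_conj, add_comm])

theorem exists_algebraMap_eq_mul_conj (y : S) : ∃ r, algebraMap R S r = y * σ.conj y :=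
  σ.exists_algebraMap_eq _ (by rw [map_mul, σ.conj_conj, mul_comm])

/-- The relative trace `y + conj y`, as an element of `R`. -/
def trace (y : S) : R := (σ.exists_algebraMap_eq_add_conj y).choose

theorem algebraMap_trace (y : S) : algebraMap R S (σ.trace y) = y + σ.conj y :=
  (σ.exists_algebraMap_eq_add_conj y).choose_spec

theorem algebraMap_dvd_sub_conj_mul {r : R} {y z : S} (hz : r ∣ σ.trace z)
    (hyz : r ∣ σ.trace (y * z)) : algebraMap R S r ∣ (y - σ.conj y) * z := by
  have htrace : (y - σ.conj y) * z =
      algebraMap R S (σ.trace (y * z)) - σ.conj y * algebraMap R S (σ.trace z) := by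
    rw [algebraMap_trace, algebraMap_trace, map_mul]
    ring
  rw [htrace]
  exact dvd_sub (map_dvd _ hyz) ((map_dvd _ hz).mul_left _)

variable [FaithfulSMul R S]

/-- The relative norm `y * conj y`, as an element of `R`. -/
def norm : S →* R where
  toFun y := (σ.exists_algebraMap_eq_mul_conj y).choose
  map_one' := by
    apply FaithfulSMul.algebraMap_injective R S
    rw [(σ.exists_algebraMap_eq_mul_conj 1).choose_spec, map_one, map_one, mul_one]
  map_mul' x y := by
    apply FaithfulSMul.algebraMap_injective R S
    rw [map_mul (algebraMap R S), (σ.exists_algebraMap_eq_mul_conj (x * y)).choose_spec,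
      (σ.exists_algebraMap_eq_mul_conj x).choose_spec,
      (σ.exists_algebraMap_eq_mul_conj y).choose_spec, map_mul, mul_mul_mul_comm]

theorem algebraMap_norm (y : S) : algebraMap R S (σ.norm y) = y * σ.conj y :=
  (σ.exists_algebraMap_eq_mul_conj y).choose_spec

@[simp] theorem norm_algebraMap (r : R) : σ.norm (algebraMap R S r) = r ^ 2 := by
  apply FaithfulSMul.algebraMap_injective R S
  rw [algebraMap_norm, AlgEquiv.commutes, map_pow, sq]

variable [IsDomain S]

theorem norm_ne_zero {y : S} (hy : y ≠ 0) : σ.norm y ≠ 0 := by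
  intro h
  have hmul : y * σ.conj y = 0 := by rw [← algebraMap_norm, h, map_zero]
  exact (mul_ne_zero hy (by simpa using hy)) hmul

theorem algebraMap_dvd_algebraMap_iff (σ : QuadraticConj R S) {a b : R} :
    algebraMap R S a ∣ algebraMap R S b ↔ a ∣ b := by
  refine ⟨?_, fun h ↦ map_dvd _ h⟩
  rintro ⟨c, hc⟩
  rcases eq_or_ne (algebraMap R S a) 0 with ha | ha
  · have hb : b = 0 := by simpa [ha] using hc
    exact hb ▸ dvd_zero a
  · have hfix : σ.conj c = c := by
      have hconj := congrArg σ.conj hc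
      rw [map_mul, AlgEquiv.commutes, AlgEquiv.commutes, hc] at hconj
      exact (mul_left_cancel₀ ha hconj).symm
    obtain ⟨r, rfl⟩ := σ.exists_algebraMap_eq c hfix
    exact ⟨r, FaithfulSMul.algebraMap_injective R S (by rw [hc, map_mul])⟩

theorem span_algebraMap_eq_iff (σ : QuadraticConj R S) {a b : R} :
    Ideal.span {algebraMap R S a} = Ideal.span {algebraMap R S b} ↔ Associated a b := by
  have : IsDomain R := (FaithfulSMul.algebraMap_injective R S).isDomain (algebraMap R S)
  rw [Ideal.span_singleton_eq_span_singleton, ← dvd_dvd_iff_associated,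
    σ.algebraMap_dvd_algebraMap_iff, σ.algebraMap_dvd_algebraMap_iff, dvd_dvd_iff_associated]

theorem algebraMap_dvd_of_dvd_trace_of_sq_dvd_norm [IsIntegrallyClosed S] {d : R} {z : S}
    (htrace : d ∣ σ.trace z) (hnorm : d ^ 2 ∣ σ.norm z) : algebraMap R S d ∣ z := by
  obtain ⟨t, ht⟩ := htrace
  obtain ⟨n, hn⟩ := hnorm
  rcases eq_or_ne d 0 with rfl | hd
  · have hz : z = 0 := by
      by_contra hz
      exact σ.norm_ne_zero hz (by simpa using hn)
    rw [hz]
    exact dvd_zero _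
  have hdK : algebraMap S (FractionRing S) (algebraMap R S d) ≠ 0 := by simpa using hd
  have hroot : z ^ 2 - algebraMap R S (d * t) * z + algebraMap R S (d ^ 2 * n) = 0 := by
    rw [← ht, ← hn, algebraMap_trace, algebraMap_norm]
    ring
  have hint : IsIntegral S (algebraMap S (FractionRing S) z /
      algebraMap S (FractionRing S) (algebraMap R S d)) := by
    refine ⟨.X ^ 2 - .C (algebraMap R S t) * .X + .C (algebraMap R S n), by monicity!, ?_⟩
    simp only [Polynomial.eval₂_add, Polynomial.eval₂_sub, Polynomial.eval₂_mul,
      Polynomial.eval₂_pow, Polynomial.eval₂_X, Polynomial.eval₂_C]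
    have hrootK := congrArg (algebraMap S (FractionRing S)) hroot
    simp only [map_add, map_sub, map_mul, map_pow, map_zero] at hrootK
    field_simp
    linear_combination hrootK
  obtain ⟨y, hy⟩ := IsIntegrallyClosed.isIntegral_iff.1 hint
  refine ⟨y, FaithfulSMul.algebraMap_injective S (FractionRing S) ?_⟩
  rw [map_mul (algebraMap S (FractionRing S)), hy, mul_div_cancel₀ _ hdK]

end Norm

section ConjIdeal

variable {R S : Type*} [CommRing R] [CommRing S] [Algebra R S] (σ : QuadraticConj R S)

/-- The action of the conjugation on ideals. -/
def conjIdeal : Ideal S →+* Ideal S := Ideal.mapHom (σ.conj : S →+* S)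

theorem mem_conjIdeal {I : Ideal S} {y : S} : y ∈ σ.conjIdeal I ↔ σ.conj y ∈ I := by
  refine ⟨fun h ↦ ?_, fun h ↦ ?_⟩
  · obtain ⟨x, hx, rfl⟩ := (Ideal.mem_map_iff_of_surjective (σ.conj : S →+* S)
      σ.conj.surjective).1 h
    rwa [RingHom.coe_coe, σ.conj_conj]
  · have hmem : σ.conj (σ.conj y) ∈ σ.conjIdeal I :=
      Ideal.mem_map_of_mem (σ.conj : S →+* S) h
    rwa [σ.conj_conj] at hmem

@[simp] theorem conjIdeal_conjIdeal (I : Ideal S) : σ.conjIdeal (σ.conjIdeal I) = I := by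
  ext y
  rw [mem_conjIdeal, mem_conjIdeal, σ.conj_conj]

@[simp] theorem conjIdeal_span_singleton (y : S) :
    σ.conjIdeal (Ideal.span {y}) = Ideal.span {σ.conj y} := by
  simp [conjIdeal, Ideal.map_span]

theorem conjIdeal_isPrime {I : Ideal S} (h : I.IsPrime) : (σ.conjIdeal I).IsPrime := by
  have hcomap : σ.conjIdeal I = I.comap (σ.conj : S →+* S) := by
    ext y
    rw [mem_conjIdeal, Ideal.mem_comap, RingHom.coe_coe]
  rw [hcomap]
  exact Ideal.comap_isPrime _ _

theorem conjIdeal_ne_bot {I : Ideal S} (h : I ≠ ⊥) : σ.conjIdeal I ≠ ⊥ := by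
  intro hbot
  apply h
  rw [← σ.conjIdeal_conjIdeal I, hbot]
  exact map_zero σ.conjIdeal

variable [FaithfulSMul R S] [IsDomain S]

theorem exists_mul_conjIdeal_eq_span [IsPrincipalIdealRing R] [IsIntegrallyClosed S]
    (I : Ideal S) : ∃ x : R, I * σ.conjIdeal I = Ideal.span {algebraMap R S x} := by
  let A : Ideal R := (I * σ.conjIdeal I).comap (algebraMap R S)
  let d := Submodule.IsPrincipal.generator A
  have hdvd {r : R} (hr : algebraMap R S r ∈ I * σ.conjIdeal I) : d ∣ r :=
    (Submodule.IsPrincipal.mem_iff_generator_dvd A).1 hr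
  have conj_mem {a : S} (ha : a ∈ I) : σ.conj a ∈ σ.conjIdeal I := by
    rwa [mem_conjIdeal, σ.conj_conj]
  have dvd_norm {a : S} (ha : a ∈ I) : d ∣ σ.norm a :=
    hdvd (by rw [algebraMap_norm]; exact Ideal.mul_mem_mul ha (conj_mem ha))
  refine ⟨d, le_antisymm (Ideal.mul_le.2 fun a ha b hb ↦ ?_) ?_⟩
  · rw [Ideal.mem_span_singleton]
    have hb' : σ.conj b ∈ I := σ.mem_conjIdeal.1 hb
    apply σ.algebraMap_dvd_of_dvd_trace_of_sq_dvd_norm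
    · refine hdvd ?_
      rw [algebraMap_trace, map_mul, mul_comm (σ.conj a)]
      exact add_mem (Ideal.mul_mem_mul ha hb) (Ideal.mul_mem_mul hb' (conj_mem ha))
    · rw [sq, map_mul]
      refine mul_dvd_mul (dvd_norm ha) (hdvd ?_)
      rw [algebraMap_norm, mul_comm b]
      exact Ideal.mul_mem_mul hb' hb
  · rw [Ideal.span_singleton_le_iff_mem]
    exact Submodule.IsPrincipal.generator_mem A

end ConjIdeal

/-- If `a` is a square `t ^ 2` modulo `x`, the ideal `(x, √a - t)` has relative norm `(x)`. -/
theorem exists_mul_conjIdeal_eq_span_of_dvd_sq_sub {R S : Type*} [CommRing R] [CommRing S]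
    [Algebra R S] (σ : QuadraticConj R S) {a x t : R} {s : S} (hs : s * s = algebraMap R S a)
    (hconj : σ.conj s = -s) (hx : IsCoprime x (4 * a)) (ht : x ∣ t * t - a) :
    ∃ I : Ideal S, I * σ.conjIdeal I = Ideal.span {algebraMap R S x} := by
  obtain ⟨w, hw⟩ := ht
  obtain ⟨c, d, hcd⟩ := hx
  set X := algebraMap R S x
  set T := algebraMap R S t
  have hw' : T * T - s * s = X * algebraMap R S w := by
    rw [hs, ← map_mul, ← map_mul, ← map_sub, hw]
  have hcd' : algebraMap R S c * X + algebraMap R S d * (4 * (s * s)) = 1 := by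
    rw [hs, ← map_one (algebraMap R S), ← hcd]
    simp only [X, map_add, map_mul, map_ofNat]
  have hconjX : σ.conjIdeal (Ideal.span {X, s - T}) = Ideal.span {X, -s - T} := by
    simp [conjIdeal, Ideal.map_span, Set.image_pair, X, T, hconj]
  refine ⟨Ideal.span {X, s - T}, ?_⟩
  rw [hconjX, Ideal.span_pair_mul_span_pair]
  apply le_antisymm
  · rw [Ideal.span_le]
    rintro y (rfl | rfl | rfl | rfl) <;> simp only [SetLike.mem_coe, Ideal.mem_span_singleton]
    · exact dvd_mul_right X X
    · exact dvd_mul_right X _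
    · exact dvd_mul_left X _
    · exact ⟨algebraMap R S w, by rw [← hw']; ring⟩
  · rw [Ideal.span_singleton_le_iff_mem]
    set J := Ideal.span {X * X, X * (-s - T), (s - T) * X, (s - T) * (-s - T)}
    have hXX : X * X ∈ J := Ideal.subset_span (by simp)
    have h₁ : X * (-s - T) ∈ J := Ideal.subset_span (by simp)
    have h₂ : (s - T) * X ∈ J := Ideal.subset_span (by simp)
    have hX : X = algebraMap R S c * (X * X) +
        algebraMap R S d * 2 * s * ((s - T) * X - X * (-s - T)) := by
      linear_combination (-X) * hcd'
    rw [hX]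
    exact add_mem (Ideal.mul_mem_left _ _ hXX) (Ideal.mul_mem_left _ _ (sub_mem h₂ h₁))

section Ramified

variable {R S : Type*} [CommRing R] [CommRing S] [Algebra R S] (σ : QuadraticConj R S)

/-- An ideal is ramified if the conjugation acts trivially on its residue ring; for a prime ideal
this says that the inertia group is everything. -/
def IsRamified (Q : Ideal S) : Prop := ∀ y, y - σ.conj y ∈ Q

variable {σ}

theorem IsRamified.conjIdeal_eq {Q : Ideal S} (hQ : σ.IsRamified Q) : σ.conjIdeal Q = Q := by
  ext y
  rw [mem_conjIdeal]
  exact ⟨fun h ↦ by simpa using add_mem (hQ y) h, fun h ↦ by simpa using sub_mem h (hQ y)⟩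

theorem IsRamified.mem_iff_norm_mem [FaithfulSMul R S] {Q : Ideal S} (hQ : σ.IsRamified Q)
    [hprime : Q.IsPrime] {y : S} : y ∈ Q ↔ σ.norm y ∈ Q.comap (algebraMap R S) := by
  rw [Ideal.mem_comap, algebraMap_norm, hprime.mul_mem_iff_mem_or_mem, ← mem_conjIdeal,
    hQ.conjIdeal_eq, or_self]

theorem IsRamified.eq_of_comap_eq [FaithfulSMul R S] {P Q : Ideal S} [P.IsPrime] [Q.IsPrime]
    (hP : σ.IsRamified P) (hQ : σ.IsRamified Q)
    (h : P.comap (algebraMap R S) = Q.comap (algebraMap R S)) : P = Q := by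
  ext y
  rw [hP.mem_iff_norm_mem, hQ.mem_iff_norm_mem, h]

variable [FaithfulSMul R S] [IsDedekindDomain S] [IsPrincipalIdealRing R]

/-- Write `(q)` for the prime of `R` below `Q` and choose `δ = ω - conj ω` outside `Q`. For `z ∈ Q`,
`δ * z` is a combination of the traces of `z` and `ω * z`, so that `δ * Q ⊆ q * S`. -/
theorem exists_eq_span_algebraMap_of_not_isRamified {Q : Ideal S} (hQ : Q.IsPrime)
    (hbot : Q ≠ ⊥) (hinv : σ.conjIdeal Q = Q) (hram : ¬ σ.IsRamified Q) :
    ∃ x : R, Q = Ideal.span {algebraMap R S x} := by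
  let A : Ideal R := Q.comap (algebraMap R S)
  let q := Submodule.IsPrincipal.generator A
  have hdvd {r : R} (hr : algebraMap R S r ∈ Q) : q ∣ r :=
    (Submodule.IsPrincipal.mem_iff_generator_dvd A).1 hr
  have hle : Ideal.span {algebraMap R S q} ≤ Q :=
    (Ideal.span_singleton_le_iff_mem _).2 (Submodule.IsPrincipal.generator_mem A)
  obtain ⟨ω, hω⟩ : ∃ ω, ω - σ.conj ω ∉ Q := not_forall.1 hram
  have hmul : Ideal.span {ω - σ.conj ω} * Q ≤ Ideal.span {algebraMap R S q} := by
    refine Ideal.span_singleton_mul_le_iff.2 fun z hz ↦ Ideal.mem_span_singleton.2 ?_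
    have hz' : σ.conj z ∈ Q := by rwa [← mem_conjIdeal, hinv]
    refine σ.algebraMap_dvd_sub_conj_mul (hdvd ?_) (hdvd ?_)
    · rw [algebraMap_trace]
      exact add_mem hz hz'
    · rw [algebraMap_trace, map_mul]
      exact add_mem (Q.mul_mem_left _ hz) (Q.mul_mem_left _ hz')
  obtain ⟨J, hJ⟩ := Ideal.dvd_iff_le.2 hle
  obtain ⟨x, hx⟩ := σ.exists_mul_conjIdeal_eq_span Q
  rw [hinv] at hx
  have hJQ : J ∣ Q := by
    have hqx : q ∣ x := hdvd (Ideal.mul_le_left (J := Q) (I := Q)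
      (by rw [hx]; exact Ideal.mem_span_singleton_self _))
    rw [← mul_dvd_mul_iff_left hbot, ← hJ, hx, Ideal.dvd_iff_le,
      Ideal.span_singleton_le_span_singleton]
    exact map_dvd _ hqx
  refine ⟨q, ?_⟩
  rcases (Ideal.prime_of_isPrime hbot hQ).irreducible.dvd_iff.1 hJQ with hunit | hassoc
  · rw [hJ, Ideal.isUnit_iff.1 hunit, Ideal.mul_top]
  · have hJδ : J ∣ Ideal.span {ω - σ.conj ω} := by
      rw [← mul_dvd_mul_iff_right hbot, mul_comm J, ← hJ]
      exact Ideal.dvd_iff_le.2 hmul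
    have hQδ := Ideal.dvd_iff_le.1 (hassoc.dvd.trans hJδ)
    exact absurd ((Ideal.span_singleton_le_iff_mem _).1 hQδ) hω

end Ramified

/-! ### Ambiguous ideals -/

section Ambiguous

variable {R S : Type*} [CommRing R] [CommRing S] [Algebra R S] (σ : QuadraticConj R S)

/-- The ramified nonzero primes of a quadratic extension. -/
def RamifiedPrime : Type _ :=
  {Q : IsDedekindDomain.HeightOneSpectrum S // σ.IsRamified Q.asIdeal}

variable [Fintype σ.RamifiedPrime]

/-- The product of an ideal extended from `R` and of powers of ramified primes. The nonzero ideals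
of this form are the ideals that are invariant under the conjugation. -/
def ambiguousIdeal (x : R) (v : σ.RamifiedPrime → ℕ) : Ideal S :=
  Ideal.span {algebraMap R S x} * ∏ Q, Q.1.asIdeal ^ v Q

theorem ambiguousIdeal_mul (x y : R) (v w : σ.RamifiedPrime → ℕ) :
    σ.ambiguousIdeal x v * σ.ambiguousIdeal y w = σ.ambiguousIdeal (x * y) (v + w) := by
  simp only [ambiguousIdeal, map_mul, ← Ideal.span_singleton_mul_span_singleton, Pi.add_apply,
    pow_add, Finset.prod_mul_distrib]
  ring

theorem ambiguousIdeal_zero (x : R) : σ.ambiguousIdeal x 0 = Ideal.span {algebraMap R S x} := by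
  simp only [ambiguousIdeal, Pi.zero_apply, pow_zero, Finset.prod_const_one, mul_one]

theorem ambiguousIdeal_one_single [DecidableEq σ.RamifiedPrime] (Q : σ.RamifiedPrime) :
    σ.ambiguousIdeal 1 (Pi.single Q 1) = Q.1.asIdeal := by
  rw [ambiguousIdeal, map_one, Ideal.span_singleton_one, Ideal.top_mul,
    Fintype.prod_eq_single Q fun Q' hQ' ↦ by rw [Pi.single_eq_of_ne hQ', pow_zero],
    Pi.single_eq_same, pow_one]

theorem conjIdeal_ambiguousIdeal (x : R) (v : σ.RamifiedPrime → ℕ) :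
    σ.conjIdeal (σ.ambiguousIdeal x v) = σ.ambiguousIdeal x v := by
  simp only [ambiguousIdeal, map_mul, conjIdeal_span_singleton, AlgEquiv.commutes, map_prod,
    map_pow, fun Q : σ.RamifiedPrime ↦ Q.2.conjIdeal_eq]

variable [FaithfulSMul R S] [IsDedekindDomain S] [IsPrincipalIdealRing R]

theorem exists_ambiguousIdeal_dvd {J : Ideal S} (hbot : J ≠ ⊥) (htop : J ≠ ⊤)
    (hinv : σ.conjIdeal J = J) : ∃ x v, σ.ambiguousIdeal x v ∣ J ∧ σ.ambiguousIdeal x v ≠ ⊤ := by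
  classical
  obtain ⟨Q, hmax, hJQ⟩ := Ideal.exists_le_maximal J htop
  have hQ : Q.IsPrime := hmax.isPrime
  have hQ0 : Q ≠ ⊥ := ne_bot_of_le_ne_bot hbot hJQ
  by_cases hconj : σ.conjIdeal Q = Q
  · obtain ⟨x, v, hxv⟩ : ∃ x v, σ.ambiguousIdeal x v = Q := by
      by_cases hram : σ.IsRamified Q
      · exact ⟨1, _, σ.ambiguousIdeal_one_single ⟨⟨Q, hQ, hQ0⟩, hram⟩⟩
      · obtain ⟨x, hx⟩ := exists_eq_span_algebraMap_of_not_isRamified hQ hQ0 hconj hram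
        exact ⟨x, 0, by rw [ambiguousIdeal_zero, hx]⟩
    exact ⟨x, v, by rw [hxv]; exact Ideal.dvd_iff_le.2 hJQ, by rw [hxv]; exact hmax.ne_top⟩
  · obtain ⟨x, hx⟩ := σ.exists_mul_conjIdeal_eq_span Q
    obtain ⟨J', rfl⟩ := Ideal.dvd_iff_le.2 hJQ
    have hQ' : (σ.conjIdeal Q).IsPrime := σ.conjIdeal_isPrime hQ
    refine ⟨x, 0, ?_, ?_⟩ <;> rw [ambiguousIdeal_zero, ← hx]
    · have hdvd : σ.conjIdeal Q ∣ Q * J' := by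
        rw [← hinv, map_mul]
        exact dvd_mul_right _ _
      refine mul_dvd_mul_left Q
        (((Ideal.prime_of_isPrime (σ.conjIdeal_ne_bot hQ0) hQ').dvd_or_dvd hdvd).resolve_left ?_)
      exact fun h ↦ hconj (hmax.eq_of_le hQ'.ne_top (Ideal.dvd_iff_le.1 h)).symm
    · exact fun h ↦ hmax.ne_top (top_le_iff.1 (h ▸ Ideal.mul_le_left))

theorem exists_ambiguousIdeal_eq {J : Ideal S} (hbot : J ≠ ⊥) (hinv : σ.conjIdeal J = J) :
    ∃ x v, σ.ambiguousIdeal x v = J := by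
  induction J using WellFoundedGT.induction with
  | ind J ih =>
  by_cases htop : J = ⊤
  · exact ⟨1, 0, by rw [ambiguousIdeal_zero, map_one, Ideal.span_singleton_one, htop]⟩
  obtain ⟨x, v, ⟨J', rfl⟩, hne⟩ := σ.exists_ambiguousIdeal_dvd hbot htop hinv
  set A := σ.ambiguousIdeal x v with hA
  have hA0 : A ≠ ⊥ := left_ne_zero_of_mul hbot
  have hJ'0 : J' ≠ ⊥ := right_ne_zero_of_mul hbot
  have hlt : A * J' < J' := by
    refine lt_of_le_of_ne Ideal.mul_le_right fun h ↦ hne ?_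
    rw [← Ideal.one_eq_top]
    exact mul_right_cancel₀ hJ'0 (by rw [h, one_mul])
  obtain ⟨y, w, rfl⟩ := ih J' hlt hJ'0 (mul_left_cancel₀ hA0 (by
    rw [map_mul, hA, conjIdeal_ambiguousIdeal] at hinv
    exact hinv))
  exact ⟨x * y, v + w, (σ.ambiguousIdeal_mul x y v w).symm⟩

theorem exists_ambiguousIdeal_eq_span (x : R) {v : σ.RamifiedPrime → ℕ} (hv : ∀ Q, Even (v Q)) :
    ∃ y : R, σ.ambiguousIdeal x v = Ideal.span {algebraMap R S y} := by
  choose w hw using hv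
  choose z hz using fun Q : σ.RamifiedPrime ↦ σ.exists_mul_conjIdeal_eq_span Q.1.asIdeal
  refine ⟨x * ∏ Q, z Q ^ w Q, ?_⟩
  rw [ambiguousIdeal, map_mul, ← Ideal.span_singleton_mul_span_singleton, map_prod,
    ← Ideal.prod_span_singleton]
  congr 1
  refine Finset.prod_congr rfl fun Q _ ↦ ?_
  rw [map_pow, ← Ideal.span_singleton_pow, ← hz, Q.2.conjIdeal_eq, hw, pow_add, mul_pow]

end Ambiguous

/-! ### Ideal classes of order two -/

section Twist

variable {R S : Type*} [CommRing R] [CommRing S] [Algebra R S] [FaithfulSMul R S]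
  (σ : QuadraticConj R S)

/-- `conj I = β I` for some `β` in the fraction field of `S` with norm `u`; the element `β` is
written as a fraction `α / δ`. An ideal of order two in the class group has this property for some
unit `u`, and the obstruction to finding an invariant ideal in its class is `u` modulo norms. -/
def IsTwist (I : Ideal S) (u : R) : Prop :=
  ∃ α δ : S, δ ≠ 0 ∧ Ideal.span {δ} * σ.conjIdeal I = Ideal.span {α} * I ∧
    σ.norm α = u * σ.norm δ

variable {σ}

theorem IsTwist.mul [IsDomain S] {I J : Ideal S} {u v : R} (hI : σ.IsTwist I u)
    (hJ : σ.IsTwist J v) : σ.IsTwist (I * J) (u * v) := by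
  obtain ⟨α, δ, hδ, hconj, hnorm⟩ := hI
  obtain ⟨α', δ', hδ', hconj', hnorm'⟩ := hJ
  refine ⟨α * α', δ * δ', mul_ne_zero hδ hδ', ?_, ?_⟩
  · rw [map_mul, ← Ideal.span_singleton_mul_span_singleton,
      ← Ideal.span_singleton_mul_span_singleton, mul_mul_mul_comm, hconj, hconj',
      mul_mul_mul_comm]
  · rw [map_mul, map_mul, hnorm, hnorm', mul_mul_mul_comm]

theorem isTwist_top_norm [IsDomain S] (η : Sˣ) : σ.IsTwist ⊤ (σ.norm η) := by
  refine ⟨η, 1, one_ne_zero, ?_, by rw [map_one, mul_one]⟩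
  rw [Ideal.span_singleton_one, Ideal.span_singleton_eq_top.2 η.isUnit, ← Ideal.one_eq_top,
    map_one]

theorem IsTwist.of_norm [IsDomain S] {I : Ideal S} {η : Sˣ} (h : σ.IsTwist I (σ.norm η)) :
    σ.IsTwist I 1 := by
  obtain ⟨α, δ, hδ, hconj, hnorm⟩ := h
  refine ⟨α, η * δ, mul_ne_zero η.ne_zero hδ, ?_, by rw [hnorm, map_mul, one_mul]⟩
  rwa [Ideal.span_singleton_mul_left_unit η.isUnit]

/-- Hilbert 90: if `conj I = (α / δ) I` with `α / δ` of norm `1`, one may take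
`γ = (1 + α / δ) * norm δ`, or `γ = 1` when `α / δ = -1`. -/
theorem IsTwist.exists_conjIdeal_eq [IsDedekindDomain S] {I : Ideal S} (h : σ.IsTwist I 1) :
    ∃ γ : S, γ ≠ 0 ∧ σ.conjIdeal (Ideal.span {γ} * I) = Ideal.span {γ} * I := by
  obtain ⟨α, δ, hδ, hconj, hnorm⟩ := h
  have hδ' : Ideal.span {δ} ≠ ⊥ := by simpa using hδ
  by_cases h0 : δ + α = 0
  · refine ⟨1, one_ne_zero, ?_⟩
    rw [eq_neg_of_add_eq_zero_right h0, Ideal.span_singleton_neg] at hconj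
    rw [Ideal.span_singleton_one, Ideal.top_mul]
    exact mul_left_cancel₀ hδ' hconj
  · refine ⟨(δ + α) * σ.conj δ, mul_ne_zero h0 (by simpa using hδ), mul_left_cancel₀ hδ' ?_⟩
    have hnorm' : α * σ.conj α = δ * σ.conj δ := by
      rw [← algebraMap_norm, ← algebraMap_norm, hnorm, one_mul]
    have hγ : σ.conj ((δ + α) * σ.conj δ) * α = δ * ((δ + α) * σ.conj δ) := by
      rw [map_mul, σ.conj_conj, map_add]
      linear_combination δ * hnorm'
    rw [map_mul, conjIdeal_span_singleton, mul_left_comm, hconj, ← mul_assoc, ← mul_assoc,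
      Ideal.span_singleton_mul_span_singleton, Ideal.span_singleton_mul_span_singleton, hγ]

/-- If `I ^ 2 = (a)` and `I * conj I = (x)` with `x ∈ R`, then `conj I = (x / a) I`, and `x / a` has
unit norm. -/
theorem exists_isTwist_of_sq_eq_one [IsPrincipalIdealRing R] [IsDedekindDomain S]
    {I : (Ideal S)⁰} (h : ClassGroup.mk0 I ^ 2 = 1) : ∃ u : Rˣ, σ.IsTwist I u := by
  have hI : (I : Ideal S) ≠ ⊥ := nonZeroDivisors.coe_ne_zero I
  rw [← map_pow, ClassGroup.mk0_eq_one_iff] at h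
  obtain ⟨a, ha : ((I ^ 2 : (Ideal S)⁰) : Ideal S) = Ideal.span {a}⟩ := h
  rw [SubmonoidClass.coe_pow, sq] at ha
  obtain ⟨x, hx⟩ := σ.exists_mul_conjIdeal_eq_span (I : Ideal S)
  have ha0 : a ≠ 0 := by
    rw [Ne, ← Ideal.span_singleton_eq_bot, ← ha]
    exact mul_ne_zero hI hI
  obtain ⟨v, hv⟩ : Associated (σ.norm a) (x * x) := by
    rw [← σ.span_algebraMap_eq_iff (S := S), algebraMap_norm, map_mul,
      ← Ideal.span_singleton_mul_span_singleton, ← Ideal.span_singleton_mul_span_singleton,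
      ← conjIdeal_span_singleton, ← ha, ← hx, map_mul, mul_mul_mul_comm]
  refine ⟨v, algebraMap R S x, a, ha0, ?_, ?_⟩
  · rw [← ha, ← hx]
    ring
  · rw [norm_algebraMap, sq, ← hv, mul_comm]

end Twist

end QuadraticConj

/-! ### The ambiguous class number inequality -/

/-- The homomorphism `v ↦ ∏ i, c i ^ v i` from `(ℤ/n)^ι` given by elements `c i` of order
dividing `n`. -/
def prodPowHom {ι G : Type*} [Fintype ι] [CommGroup G] (n : ℕ) [NeZero n] (c : ι → G)
    (hc : ∀ i, c i ^ n = 1) : Multiplicative (ι → ZMod n) →* G where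
  toFun v := ∏ i, c i ^ (v.toAdd i).val
  map_one' := by simp
  map_mul' v w := by
    rw [← Finset.prod_mul_distrib]
    refine Finset.prod_congr rfl fun i _ ↦ ?_
    rw [toAdd_mul, Pi.add_apply, ← pow_add, ZMod.val_add, ← pow_eq_pow_mod _ (hc i)]

theorem prodPowHom_ofAdd_natCast {ι G : Type*} [Fintype ι] [CommGroup G] {n : ℕ} [NeZero n]
    {c : ι → G} (hc : ∀ i, c i ^ n = 1) (v : ι → ℕ) :
    prodPowHom n c hc (.ofAdd fun i ↦ (v i : ZMod n)) = ∏ i, c i ^ v i := by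
  refine Finset.prod_congr rfl fun i _ ↦ ?_
  rw [toAdd_ofAdd, ZMod.val_natCast, ← pow_eq_pow_mod _ (hc i)]

theorem index_le_index_of_mul_mem {A B : Type*} [CommGroup A] [CommGroup B]
    {H : Subgroup A} {K : Subgroup B} [K.FiniteIndex] (hH : ∀ a, a ^ 2 ∈ H) (hK : ∀ b, b ^ 2 ∈ K)
    (f : A → B) (hf : ∀ a a', f a * f a' ∈ K → a * a' ∈ H) : H.index ≤ K.index := by
  refine Nat.card_le_card_of_injective (fun q : A ⧸ H ↦ (f q.out : B ⧸ K)) fun q q' hqq' ↦ ?_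
  have hmem : f q.out * f q'.out ∈ K := by
    have h := mul_mem (hK (f q.out)) (QuotientGroup.eq.1 hqq')
    rwa [sq, mul_assoc, mul_inv_cancel_left] at h
  rw [← q.out_eq', ← q'.out_eq']
  refine QuotientGroup.eq.2 ?_
  have h := mul_mem (inv_mem (hH q.out)) (hf _ _ hmem)
  rwa [sq, mul_inv, mul_assoc, inv_mul_cancel_left] at h

namespace QuadraticConj

section Units

variable {R S : Type*} [CommRing R] [CommRing S] [Algebra R S] (σ : QuadraticConj R S)

/-- The homomorphism `u ↦ u / conj u` on units. -/
def divConjUnits : Sˣ →* Sˣ := MonoidHom.id _ / Units.map (σ.conj : S →* S)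

theorem divConjUnits_apply (u : Sˣ) :
    σ.divConjUnits u = u / Units.map (σ.conj : S →* S) u := rfl

theorem mul_mem_range_divConjUnits [IsDomain S] {η η' : Sˣ} {γ γ' : S} (hγ : γ ≠ 0) (hγ' : γ' ≠ 0)
    (hη : γ = η * σ.conj γ) (hη' : γ' = η' * σ.conj γ') {x : R}
    (hx : Ideal.span {γ * γ'} = Ideal.span {algebraMap R S x}) :
    η * η' ∈ σ.divConjUnits.range := by
  obtain ⟨ε, hε⟩ := Ideal.span_singleton_eq_span_singleton.1 hx.symm
  have hx0 : algebraMap R S x ≠ 0 := left_ne_zero_of_mul (hε ▸ mul_ne_zero hγ hγ')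
  refine ⟨ε, ?_⟩
  rw [divConjUnits_apply, div_eq_iff_eq_mul]
  refine Units.ext (mul_left_cancel₀ hx0 ?_)
  calc algebraMap R S x * ε = γ * γ' := hε
    _ = η * η' * σ.conj (γ * γ') := by
      conv_lhs => rw [hη, hη']
      rw [map_mul, mul_mul_mul_comm]
    _ = η * η' * (algebraMap R S x * σ.conj ε) := by rw [← hε, map_mul, AlgEquiv.commutes]
    _ = algebraMap R S x * (η * η' * σ.conj ε) := by ring

variable [FaithfulSMul R S]

/-- The relative norm on units. -/
def normUnits : Sˣ →* Rˣ := Units.map σ.norm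

theorem normUnits_algebraMap (u : Rˣ) :
    σ.normUnits (Units.map (algebraMap R S : R →* S) u) = u ^ 2 :=
  Units.ext (σ.norm_algebraMap _)

theorem mem_ker_normUnits {u : Sˣ} :
    u ∈ σ.normUnits.ker ↔ Units.map (σ.conj : S →* S) u = u⁻¹ := by
  rw [MonoidHom.mem_ker, eq_inv_iff_mul_eq_one, mul_comm, Units.ext_iff, Units.ext_iff,
    ← (FaithfulSMul.algebraMap_injective R S).eq_iff]
  exact iff_of_eq (by rw [Units.val_one, map_one]; exact congrArg (· = 1) (σ.algebraMap_norm u))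

theorem divConjUnits_of_mem_ker {u : Sˣ} (hu : u ∈ σ.normUnits.ker) : σ.divConjUnits u = u ^ 2 := by
  rw [divConjUnits_apply, σ.mem_ker_normUnits.1 hu, div_inv_eq_mul, sq]

theorem divConjUnits_mem_ker (u : Sˣ) : σ.divConjUnits u ∈ σ.normUnits.ker := by
  have hconj : Units.map (σ.conj : S →* S) (Units.map (σ.conj : S →* S) u) = u :=
    Units.ext (σ.conj_conj u)
  rw [mem_ker_normUnits, divConjUnits_apply, map_div, hconj, inv_div]

theorem ker_divConjUnits : σ.divConjUnits.ker = (Units.map (algebraMap R S : R →* S)).range := by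
  ext u
  rw [MonoidHom.mem_ker, divConjUnits_apply, div_eq_one, MonoidHom.mem_range]
  constructor
  · intro h
    obtain ⟨r, hr⟩ := σ.exists_algebraMap_eq u (congrArg Units.val h).symm
    obtain ⟨r', hr'⟩ := σ.exists_algebraMap_eq (u⁻¹ : Sˣ)
      (congrArg Units.val (show u⁻¹ = Units.map (σ.conj : S →* S) u⁻¹ by rw [map_inv, ← h])).symm
    have hmul : r * r' = 1 := FaithfulSMul.algebraMap_injective R S (by
      rw [map_mul, hr, hr', map_one, Units.mul_inv])
    exact ⟨⟨r, r', hmul, by rw [mul_comm, hmul]⟩, Units.ext hr⟩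
  · rintro ⟨r, rfl⟩
    exact Units.ext (σ.conj.commutes _).symm

/-- The Herbrand quotient of the units. Both `N` and `1 - conj` map the subgroup `Rˣ · ker N` of
`Sˣ` onto a group of squares, that of `Rˣ` and that of `ker N`. -/
theorem relIndex_divConjUnits_mul_index_sq :
    σ.divConjUnits.range.relIndex σ.normUnits.ker * (powMonoidHom 2 : Rˣ →* Rˣ).range.index =
      (σ.normUnits.ker.map (powMonoidHom 2)).relIndex σ.normUnits.ker *
        σ.normUnits.range.index := by
  set ι : Rˣ →* Sˣ := Units.map (algebraMap R S : R →* S)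
  set Q : Subgroup Sˣ := ι.range ⊔ σ.normUnits.ker with hQ
  have hnorm : Q.map σ.normUnits = (powMonoidHom 2 : Rˣ →* Rˣ).range := by
    rw [hQ, Subgroup.map_sup, (Subgroup.map_eq_bot_iff _).2 le_rfl, sup_bot_eq,
      MonoidHom.map_range]
    exact congrArg _ (MonoidHom.ext σ.normUnits_algebraMap)
  have hdiv : Q.map σ.divConjUnits = σ.normUnits.ker.map (powMonoidHom 2) := by
    rw [hQ, Subgroup.map_sup, ← ker_divConjUnits, (Subgroup.map_eq_bot_iff _).2 le_rfl,
      bot_sup_eq]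
    exact SetLike.coe_injective (Set.image_congr fun u hu ↦ σ.divConjUnits_of_mem_ker hu)
  have hindexR : Q.index * σ.normUnits.range.index = (powMonoidHom 2 : Rˣ →* Rˣ).range.index := by
    rw [← hnorm, Subgroup.index_map, hQ, sup_assoc, sup_idem]
  have hindexS : (σ.normUnits.ker.map (powMonoidHom 2)).relIndex σ.divConjUnits.range =
      Q.index := by
    rw [← hdiv, MonoidHom.range_eq_map, Subgroup.relIndex_map_map, top_sup_eq,
      Subgroup.relIndex_top_right, ker_divConjUnits, hQ, sup_comm, ← sup_assoc, sup_idem]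
  have hle₁ : σ.normUnits.ker.map (powMonoidHom 2) ≤ σ.divConjUnits.range :=
    hdiv ▸ Subgroup.map_le_range _ _
  have hle₂ : σ.divConjUnits.range ≤ σ.normUnits.ker := by
    rintro _ ⟨u, rfl⟩
    exact σ.divConjUnits_mem_ker u
  rw [← hindexR, ← hindexS, ← Subgroup.relIndex_mul_relIndex _ _ _ hle₁ hle₂]
  ring

theorem index_range_normUnits_ne_zero (h : (powMonoidHom 2 : Rˣ →* Rˣ).range.index ≠ 0) :
    σ.normUnits.range.index ≠ 0 := by
  refine ne_zero_of_dvd_ne_zero h (Subgroup.index_dvd_of_le ?_)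
  rintro _ ⟨u, rfl⟩
  exact ⟨_, σ.normUnits_algebraMap u⟩

/-- Hilbert 90 for a unit `η` of norm `1`: one may take `γ = 1 + η`, or `γ = y - conj y ≠ 0` when
`η = -1`. -/
theorem exists_eq_mul_conj_of_mem_ker {η : Sˣ} (hη : η ∈ σ.normUnits.ker) :
    ∃ γ : S, γ ≠ 0 ∧ γ = η * σ.conj γ := by
  have hconj : σ.conj η = (η⁻¹ : Sˣ) := congrArg Units.val (σ.mem_ker_normUnits.1 hη)
  by_cases h : (1 : S) + η = 0
  · obtain ⟨y, hy⟩ := σ.exists_conj_ne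
    refine ⟨y - σ.conj y, sub_ne_zero.2 hy.symm, ?_⟩
    rw [map_sub, σ.conj_conj, eq_neg_of_add_eq_zero_right h]
    ring
  · refine ⟨1 + η, h, ?_⟩
    rw [map_add, map_one, hconj, mul_add, Units.mul_inv]
    ring

end Units

end QuadraticConj

theorem multiplicative_zmod_two_sq {ι : Type*} (v : Multiplicative (ι → ZMod 2)) : v ^ 2 = 1 := by
  apply Multiplicative.toAdd.injective
  funext i
  rw [toAdd_pow, toAdd_one, Pi.smul_apply, two_nsmul]
  exact CharTwo.add_self_eq_zero _

namespace QuadraticConj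

section ClassGroup

variable {R S : Type*} [CommRing R] [CommRing S] [Algebra R S] [FaithfulSMul R S]
  [IsDedekindDomain S] [IsPrincipalIdealRing R] (σ : QuadraticConj R S)

theorem mk0_sq_eq_one_of_isRamified {I : (Ideal S)⁰} (hI : σ.IsRamified I) :
    ClassGroup.mk0 I ^ 2 = 1 := by
  obtain ⟨x, hx⟩ := σ.exists_mul_conjIdeal_eq_span (I : Ideal S)
  rw [hI.conjIdeal_eq] at hx
  rw [← map_pow, ClassGroup.mk0_eq_one_iff, SubmonoidClass.coe_pow, sq, hx]
  exact ⟨_, rfl⟩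

variable [Fintype σ.RamifiedPrime]

/-- The homomorphism from `𝔽₂^t` to the class group given by the classes of the `t` ramified
primes. -/
def ramifiedClassHom : Multiplicative (σ.RamifiedPrime → ZMod 2) →* ClassGroup S :=
  prodPowHom 2
    (fun Q ↦ ClassGroup.mk0 ⟨Q.1.asIdeal, mem_nonZeroDivisors_of_ne_zero Q.1.ne_bot⟩)
    fun Q ↦ σ.mk0_sq_eq_one_of_isRamified Q.2

theorem mk0_eq_ramifiedClassHom {I : (Ideal S)⁰} {x : R} {v : σ.RamifiedPrime → ℕ}
    (h : σ.ambiguousIdeal x v = I) :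
    ClassGroup.mk0 I = σ.ramifiedClassHom (.ofAdd fun Q ↦ (v Q : ZMod 2)) := by
  have hne : σ.ambiguousIdeal x v ≠ ⊥ := h ▸ nonZeroDivisors.coe_ne_zero I
  let X : (Ideal S)⁰ := ⟨Ideal.span {algebraMap R S x},
    mem_nonZeroDivisors_of_ne_zero (left_ne_zero_of_mul hne)⟩
  have hX : ClassGroup.mk0 X = 1 := (ClassGroup.mk0_eq_one_iff X.2).2 ⟨_, rfl⟩
  have hI : I = X * ∏ Q : σ.RamifiedPrime,
      (⟨Q.1.asIdeal, mem_nonZeroDivisors_of_ne_zero Q.1.ne_bot⟩ : (Ideal S)⁰) ^ v Q := by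
    apply Subtype.ext
    rw [← h, ambiguousIdeal, Submonoid.coe_mul, Submonoid.coe_finsetProd]
    rfl
  rw [ramifiedClassHom, prodPowHom_ofAdd_natCast, hI, map_mul, hX, one_mul, map_prod]
  simp only [map_pow]

/-- A unit `η = γ / conj γ` of norm `1` makes `(γ)` ambiguous, and so yields a relation between the
classes of the ramified primes. The relation is trivial only if `γ` is a unit times an element of
`R`, that is, if `η` is `ε / conj ε` for a unit `ε`. -/
theorem relIndex_divConjUnits_le_card_ker :
    σ.divConjUnits.range.relIndex σ.normUnits.ker ≤ Nat.card σ.ramifiedClassHom.ker := by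
  have hexists : ∀ η : σ.normUnits.ker, ∃ (γ : S) (x : R) (v : σ.RamifiedPrime → ℕ),
      γ ≠ 0 ∧ γ = (η : Sˣ) * σ.conj γ ∧ σ.ambiguousIdeal x v = Ideal.span {γ} := by
    intro η
    obtain ⟨γ, hγ, hη⟩ := σ.exists_eq_mul_conj_of_mem_ker η.2
    have hinv : σ.conjIdeal (Ideal.span {γ}) = Ideal.span {γ} := by
      rw [conjIdeal_span_singleton]
      conv_rhs => rw [hη, Ideal.span_singleton_mul_left_unit (Units.isUnit _)]
    obtain ⟨x, v, hxv⟩ := σ.exists_ambiguousIdeal_eq (by simpa using hγ) hinv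
    exact ⟨γ, x, v, hγ, hη, hxv⟩
  choose γ x v hγ hη hxv using hexists
  have hker (η : σ.normUnits.ker) :
      Multiplicative.ofAdd (fun Q ↦ (v η Q : ZMod 2)) ∈ σ.ramifiedClassHom.ker := by
    have hne : Ideal.span {γ η} ≠ ⊥ := Ideal.span_singleton_eq_bot.not.2 (hγ η)
    rw [MonoidHom.mem_ker, ← σ.mk0_eq_ramifiedClassHom
      (I := ⟨_, mem_nonZeroDivisors_of_ne_zero hne⟩) (hxv η), ClassGroup.mk0_eq_one_iff]
    exact ⟨_, rfl⟩
  rw [← Subgroup.index_bot]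
  refine index_le_index_of_mul_mem (fun η ↦ ⟨η, σ.divConjUnits_of_mem_ker η.2⟩)
    (fun w ↦ ?_) (fun η ↦ ⟨_, hker η⟩) fun η η' hmul ↦ ?_
  · rw [Subgroup.mem_bot]
    exact Subtype.ext (multiplicative_zmod_two_sq _)
  · have hv (Q : σ.RamifiedPrime) : Even (v η Q + v η' Q) := by
      rw [Subgroup.mem_bot] at hmul
      have h := congrFun (congrArg (fun w ↦ Multiplicative.toAdd (Subtype.val w)) hmul) Q
      rw [← ZMod.natCast_eq_zero_iff_even, Nat.cast_add]
      exact h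
    obtain ⟨z, hz⟩ := σ.exists_ambiguousIdeal_eq_span (x η * x η') hv
    refine σ.mul_mem_range_divConjUnits (hγ η) (hγ η') (hη η) (hη η') (x := z) ?_
    rw [← Ideal.span_singleton_mul_span_singleton, ← hxv, ← hxv, ambiguousIdeal_mul]
    exact hz

theorem mk0_mem_range_ramifiedClassHom {I : (Ideal S)⁰} {η : Sˣ} (h : σ.IsTwist I (σ.norm η)) :
    ClassGroup.mk0 I ∈ σ.ramifiedClassHom.range := by
  obtain ⟨γ, hγ, hinv⟩ := h.of_norm.exists_conjIdeal_eq
  obtain ⟨X, hX⟩ : ∃ X : (Ideal S)⁰, (X : Ideal S) = Ideal.span {γ} :=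
    ⟨⟨_, mem_nonZeroDivisors_of_ne_zero (Ideal.span_singleton_eq_bot.not.2 hγ)⟩, rfl⟩
  rw [← hX, ← Submonoid.coe_mul] at hinv
  obtain ⟨x, v, hxv⟩ := σ.exists_ambiguousIdeal_eq (nonZeroDivisors.coe_ne_zero _) hinv
  have hX1 : ClassGroup.mk0 X = 1 := by
    rw [← SetLike.eta X X.2, ClassGroup.mk0_eq_one_iff, hX]
    exact ⟨_, rfl⟩
  rw [← one_mul (ClassGroup.mk0 I), ← hX1, ← map_mul, σ.mk0_eq_ramifiedClassHom hxv]
  exact ⟨_, rfl⟩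

theorem relIndex_range_ramifiedClassHom_le {M : Subgroup Rˣ}
    (hM : ∀ (I : Ideal S) (u : Rˣ), σ.IsTwist I u → u ∈ M)
    (hindex : σ.normUnits.range.index ≠ 0) :
    σ.ramifiedClassHom.range.relIndex (powMonoidHom 2 : ClassGroup S →* ClassGroup S).ker ≤
      σ.normUnits.range.relIndex M := by
  have hexists : ∀ c : (powMonoidHom 2 : ClassGroup S →* ClassGroup S).ker,
      ∃ (I : (Ideal S)⁰) (u : M), ClassGroup.mk0 I = c ∧ σ.IsTwist I ((u : Rˣ) : R) := by
    rintro ⟨c, hc⟩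
    obtain ⟨I, rfl⟩ := ClassGroup.mk0_surjective c
    obtain ⟨u, hu⟩ := exists_isTwist_of_sq_eq_one (σ := σ) hc
    exact ⟨I, ⟨u, hM I u hu⟩, rfl, hu⟩
  choose I u hI htwist using hexists
  have : (σ.normUnits.range.subgroupOf M).FiniteIndex :=
    ⟨ne_zero_of_dvd_ne_zero hindex (Subgroup.relIndex_dvd_index_of_normal _ _)⟩
  refine index_le_index_of_mul_mem (fun c ↦ ?_) (fun w ↦ ?_) u fun c c' hmul ↦ ?_
  · rw [Subgroup.mem_subgroupOf, Subgroup.coe_pow, show (c : ClassGroup S) ^ 2 = 1 from c.2]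
    exact one_mem _
  · exact ⟨_, σ.normUnits_algebraMap (w : Rˣ)⟩
  · rw [Subgroup.mem_subgroupOf, MonoidHom.mem_range] at hmul
    obtain ⟨η, hη⟩ := hmul
    have hnorm : σ.norm η = (u c : Rˣ) * (u c' : Rˣ) := congrArg Units.val hη
    have h := σ.mk0_mem_range_ramifiedClassHom (I := I c * I c') (η := η) (by
      rw [hnorm]
      exact (htwist c).mul (htwist c'))
    rwa [map_mul, hI, hI] at h

theorem card_sq_torsion_mul_index_le {M : Subgroup Rˣ}
    (hM : ∀ (I : Ideal S) (u : Rˣ), σ.IsTwist I u → u ∈ M)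
    (hindex : (powMonoidHom 2 : Rˣ →* Rˣ).range.index ≠ 0) :
    Nat.card (powMonoidHom 2 : ClassGroup S →* ClassGroup S).ker * M.index *
        (σ.normUnits.ker.map (powMonoidHom 2)).relIndex σ.normUnits.ker ≤
      2 ^ Fintype.card σ.RamifiedPrime * (powMonoidHom 2 : Rˣ →* Rˣ).range.index := by
  set Cl2 := (powMonoidHom 2 : ClassGroup S →* ClassGroup S).ker
  set θ := σ.ramifiedClassHom
  set k := (σ.normUnits.ker.map (powMonoidHom 2)).relIndex σ.normUnits.ker
  set r := (powMonoidHom 2 : Rˣ →* Rˣ).range.index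
  have hnorm : σ.normUnits.range ≤ M := by
    rintro _ ⟨η, rfl⟩
    exact hM ⊤ _ (isTwist_top_norm η)
  have hθ : θ.range ≤ Cl2 := by
    rintro _ ⟨v, rfl⟩
    rw [MonoidHom.mem_ker, powMonoidHom_apply, ← map_pow, multiplicative_zmod_two_sq, map_one]
  have hCl2 : Nat.card θ.range * θ.range.relIndex Cl2 = Nat.card Cl2 := by
    simpa using Subgroup.relIndex_mul_relIndex ⊥ _ _ bot_le hθ
  have hcard : Nat.card θ.range * Nat.card θ.ker = 2 ^ Fintype.card σ.RamifiedPrime := by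
    rw [mul_comm, ← Subgroup.index_ker, Subgroup.card_mul_index]
    rw [Nat.card_congr Multiplicative.toAdd, Nat.card_fun, Nat.card_zmod, Nat.card_eq_fintype_card]
  calc Nat.card Cl2 * M.index * k
      ≤ Nat.card θ.range * σ.normUnits.range.relIndex M * M.index * k := by
        rw [← hCl2]
        gcongr
        exact σ.relIndex_range_ramifiedClassHom_le hM (σ.index_range_normUnits_ne_zero hindex)
    _ = Nat.card θ.range * (k * σ.normUnits.range.index) := by
        rw [← Subgroup.relIndex_mul_index hnorm]
        ring
    _ = Nat.card θ.range * (σ.divConjUnits.range.relIndex σ.normUnits.ker * r) := by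
        rw [relIndex_divConjUnits_mul_index_sq]
    _ ≤ Nat.card θ.range * (Nat.card θ.ker * r) := by
        gcongr
        exact σ.relIndex_divConjUnits_le_card_ker
    _ = 2 ^ Fintype.card σ.RamifiedPrime * r := by rw [← mul_assoc, hcard]

end ClassGroup

end QuadraticConj

/-! ### Norm residues at ramified primes -/

/-- Write `(α) = I * A` and `(δ) = I * B` with `A + B = 1`; then `P` does not contain both `A` and
`B`. -/
theorem exists_notMem_dvd_mul {S : Type*} [CommRing S] [IsDedekindDomain S] {P : Ideal S}
    (hP : P.IsPrime) (α : S) {δ : S} (hδ : δ ≠ 0) :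
    (∃ e ∉ P, δ ∣ α * e) ∨ ∃ e ∉ P, α ∣ δ * e := by
  obtain ⟨I, hI⟩ : ∃ I, Ideal.span {α} ⊔ Ideal.span {δ} = I := ⟨_, rfl⟩
  obtain ⟨A, hA⟩ : I ∣ Ideal.span {α} := Ideal.dvd_iff_le.2 (hI ▸ le_sup_left)
  obtain ⟨B, hB⟩ : I ∣ Ideal.span {δ} := Ideal.dvd_iff_le.2 (hI ▸ le_sup_right)
  have hI0 : I ≠ 0 := left_ne_zero_of_mul (hB ▸ Ideal.span_singleton_eq_bot.not.2 hδ)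
  have hAB : A ⊔ B = ⊤ := by
    rw [← Ideal.one_eq_top]
    exact mul_left_cancel₀ hI0 (by rw [Ideal.mul_sup, ← hA, ← hB, hI, mul_one])
  have dvd_of_mem {C D : Ideal S} {γ ε e : S} (hC : Ideal.span {γ} = I * C)
      (hD : Ideal.span {ε} = I * D) (he : e ∈ D) : ε ∣ γ * e := by
    have h : γ * e ∈ Ideal.span {γ} * D :=
      Ideal.mul_mem_mul (Ideal.mem_span_singleton_self γ) he
    rw [hC, mul_right_comm, ← hD] at h
    exact Ideal.mem_span_singleton.1 (Ideal.mul_le_left h)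
  by_cases hBP : B ≤ P
  · have hAP : ¬ A ≤ P := fun h ↦ hP.ne_top (top_le_iff.1 (hAB ▸ sup_le h hBP))
    obtain ⟨e, he, heP⟩ := SetLike.not_le_iff_exists.1 hAP
    exact .inr ⟨e, heP, dvd_of_mem hB hA he⟩
  · obtain ⟨e, he, heP⟩ := SetLike.not_le_iff_exists.1 hBP
    exact .inl ⟨e, heP, dvd_of_mem hA hB he⟩

theorem isSquare_mul_iff_right {k : Type*} [Field k] {a b : k} (ha : IsSquare a) (ha0 : a ≠ 0) :
    IsSquare (a * b) ↔ IsSquare b := by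
  refine ⟨fun h ↦ ?_, ha.mul⟩
  rw [← mul_div_cancel_left₀ b ha0]
  exact h.div ha

/-- At the least index with a nonzero exponent the triangular shape leaves only the diagonal
factor. -/
theorem eq_zero_of_isSquare_prod {R k : Type*} [CommMonoid R] [Field k] {n : ℕ} {φ : Fin n → R →* k}
    {x : Fin n → R} (hdiag : ∀ i, ¬ IsSquare (φ i (x i)))
    (htri : ∀ i j, i < j → IsSquare (φ i (x j)) ∧ φ i (x j) ≠ 0) {v : Fin n → ZMod 2}
    (h : ∀ i, IsSquare (φ i (∏ j, x j ^ (v j).val))) (i : Fin n) : v i = 0 := by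
  induction i using WellFoundedLT.induction with
  | ind i ih =>
  by_contra hvi
  have hvi : v i = 1 := (Fin.eq_one_of_ne_zero _ hvi)
  have hrest (j) (hj : j ∈ Finset.univ.erase i) :
      IsSquare (φ i (x j ^ (v j).val)) ∧ φ i (x j ^ (v j).val) ≠ 0 := by
    rcases lt_or_gt_of_ne (Finset.ne_of_mem_erase hj) with hlt | hgt
    · rw [ih j hlt, ZMod.val_zero, pow_zero, map_one]
      exact ⟨.one, one_ne_zero⟩
    · rw [map_pow]
      exact ⟨(htri i j hgt).1.pow _, pow_ne_zero _ (htri i j hgt).2⟩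
  have hi := h i
  rw [← Finset.prod_erase_mul _ _ (Finset.mem_univ i), map_mul, map_prod,
    isSquare_mul_iff_right (Finset.isSquare_prod _ fun j hj ↦ (hrest j hj).1)
      (Finset.prod_ne_zero_iff.2 fun j hj ↦ (hrest j hj).2), hvi, ZMod.val_one, pow_one] at hi
  exact hdiag i hi

namespace QuadraticConj

variable {R S : Type*} [CommRing R] [CommRing S] [Algebra R S] [FaithfulSMul R S]
  {σ : QuadraticConj R S}

section Residue

variable {k : Type*} [Field k] [NeZero (2 : k)] {ψ : R →+* k} {P : Ideal S}

theorem IsRamified.isSquare_norm (hram : σ.IsRamified P)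
    (hker : P.comap (algebraMap R S) = RingHom.ker ψ) (y : S) : IsSquare (ψ (σ.norm y)) := by
  have hmem : 4 * σ.norm y - σ.trace y ^ 2 ∈ P.comap (algebraMap R S) := by
    rw [Ideal.mem_comap]
    have h : algebraMap R S (4 * σ.norm y - σ.trace y ^ 2) = (y - σ.conj y) * -(y - σ.conj y) := by
      rw [map_sub, map_mul, map_pow, algebraMap_norm, algebraMap_trace, map_ofNat]
      ring
    exact h ▸ P.mul_mem_right _ (hram y)
  rw [hker, RingHom.mem_ker, map_sub, sub_eq_zero, map_mul, map_pow, map_ofNat] at hmem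
  refine ⟨ψ (σ.trace y) / 2, ?_⟩
  have h2 : (2 : k) ≠ 0 := two_ne_zero
  field_simp
  linear_combination hmem

/-- Divisibility by `P` is removed from numerator and denominator with `exists_notMem_dvd_mul`. -/
theorem IsRamified.isSquare_of_norm_eq_mul_norm [IsDedekindDomain S] [hP : P.IsPrime]
    (hram : σ.IsRamified P) (hker : P.comap (algebraMap R S) = RingHom.ker ψ)
    {α δ : S} (hδ : δ ≠ 0) {x : R} (h : σ.norm α = x * σ.norm δ) : IsSquare (ψ x) := by
  have : IsDomain R := (FaithfulSMul.algebraMap_injective R S).isDomain (algebraMap R S)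
  have hmem (y : S) : y ∈ P ↔ ψ (σ.norm y) = 0 := by
    rw [hram.mem_iff_norm_mem, hker, RingHom.mem_ker]
  have of_notMem {α δ : S} (hαδ : σ.norm α = x * σ.norm δ) (hn : α ∉ P ∨ δ ∉ P) :
      IsSquare (ψ x) := by
    have hδP : δ ∉ P := hn.elim (fun hα hδ ↦ hα ((hmem α).2 (by
      rw [hαδ, map_mul, (hmem δ).1 hδ, mul_zero]))) id
    rw [← isSquare_mul_iff_right (hram.isSquare_norm hker δ) (mt (hmem δ).2 hδP), mul_comm,
      ← map_mul, ← hαδ]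
    exact hram.isSquare_norm hker α
  rcases exists_notMem_dvd_mul hP α hδ with ⟨e, heP, α', hα'⟩ | ⟨e, heP, δ', hδ'⟩
  · refine of_notMem (α := α') (δ := e) (mul_left_cancel₀ (σ.norm_ne_zero hδ) ?_) (.inr heP)
    rw [← map_mul, ← hα', map_mul, h]
    ring
  · refine of_notMem (α := e) (δ := δ') (mul_left_cancel₀ (σ.norm_ne_zero hδ) ?_) (.inl heP)
    rw [← map_mul, hδ', map_mul, h]
    ring

end Residue

section LowerBound

variable [IsDedekindDomain S] [IsPrincipalIdealRing R]

theorem exists_norm_eq_mul_norm_of_mk0_mem_range {I : (Ideal S)⁰} {x : R}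
    (hx : (I : Ideal S) * σ.conjIdeal I = Ideal.span {algebraMap R S x})
    (hI : ClassGroup.mk0 I ∈ (powMonoidHom 2 : ClassGroup S →* ClassGroup S).range) :
    ∃ (u : Rˣ) (α δ : S), δ ≠ 0 ∧ σ.norm α = u * x * σ.norm δ := by
  obtain ⟨c, hc⟩ := hI
  obtain ⟨J, rfl⟩ := ClassGroup.mk0_surjective c
  obtain ⟨b, a, -, ha, hab⟩ := ClassGroup.mk0_eq_mk0_iff.1 ((map_pow _ J 2).trans hc)
  obtain ⟨y, hy⟩ := σ.exists_mul_conjIdeal_eq_span (J : Ideal S)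
  obtain ⟨u, hu⟩ : Associated (σ.norm a * x) (σ.norm b * (y * y)) := by
    rw [← σ.span_algebraMap_eq_iff (S := S)]
    simp only [map_mul, algebraMap_norm, ← Ideal.span_singleton_mul_span_singleton, ← hx, ← hy]
    have hconj := congrArg (fun K ↦ K * σ.conjIdeal K) hab
    simp only [map_mul, conjIdeal_span_singleton, SubmonoidClass.coe_pow, map_pow] at hconj
    calc _ = Ideal.span {a} * I * (Ideal.span {σ.conj a} * σ.conjIdeal I) := by ring
      _ = Ideal.span {b} * J ^ 2 * (Ideal.span {σ.conj b} * σ.conjIdeal J ^ 2) := hconj.symm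
      _ = _ := by ring
  refine ⟨u, b * algebraMap R S y, a, ha, ?_⟩
  rw [map_mul, norm_algebraMap, sq, ← hu]
  ring

theorem exists_norm_eq_mul_norm_of_mk0_prod_mem_range {ι : Type*} [Fintype ι]
    {I : ι → (Ideal S)⁰} {x : ι → R}
    (hx : ∀ i, (I i : Ideal S) * σ.conjIdeal (I i) = Ideal.span {algebraMap R S (x i)}) {v : ι → ℕ}
    (hI : ∏ i, ClassGroup.mk0 (I i) ^ v i ∈
      (powMonoidHom 2 : ClassGroup S →* ClassGroup S).range) :
    ∃ (u : Rˣ) (α δ : S), δ ≠ 0 ∧ σ.norm α = u * (∏ i, x i ^ v i) * σ.norm δ := by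
  refine exists_norm_eq_mul_norm_of_mk0_mem_range (I := ∏ i, I i ^ v i) ?_ ?_
  · simp only [Submonoid.coe_finsetProd, SubmonoidClass.coe_pow, map_prod, map_pow,
      ← Ideal.prod_span_singleton, ← Ideal.span_singleton_pow, ← hx, mul_pow,
      Finset.prod_mul_distrib]
  · simpa only [map_prod, map_pow] using hI

/-- Independence of ideal classes modulo squares, detected by characters that are triangular on
generators of the relative norms of the ideals. -/
theorem two_pow_le_card_classGroup_quotient (σ : QuadraticConj R S) [Finite (ClassGroup S)]
    {k : Type*} [Field k] {n : ℕ} (φ : Fin n → R →* k) (hunit : ∀ i (u : Rˣ), IsSquare (φ i u))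
    (hnorm : ∀ i x (α δ : S), δ ≠ 0 → σ.norm α = x * σ.norm δ → IsSquare (φ i x))
    {x : Fin n → R} (hx : ∀ i, ∃ I : Ideal S, I * σ.conjIdeal I = Ideal.span {algebraMap R S (x i)})
    (hdiag : ∀ i, ¬ IsSquare (φ i (x i)))
    (htri : ∀ i j, i < j → IsSquare (φ i (x j)) ∧ φ i (x j) ≠ 0) :
    2 ^ n ≤ Nat.card (ClassGroup S ⧸ (powMonoidHom 2 : ClassGroup S →* ClassGroup S).range) := by
  choose I hI using hx
  have hI0 (i) : I i ∈ (Ideal S)⁰ := by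
    refine mem_nonZeroDivisors_of_ne_zero fun h0 ↦ hdiag i ?_
    have hxi : x i = 0 := FaithfulSMul.algebraMap_injective R S (by
      rw [map_zero, ← Ideal.span_singleton_eq_bot, ← hI, h0, Ideal.zero_eq_bot, Ideal.bot_mul])
    exact ⟨φ i 0, by rw [hxi, ← map_mul, mul_zero]⟩
  lift I to Fin n → (Ideal S)⁰ using hI0
  set c : Fin n → ClassGroup S ⧸ (powMonoidHom 2 : ClassGroup S →* ClassGroup S).range :=
    fun i ↦ QuotientGroup.mk (ClassGroup.mk0 (I i))
  have hc (i) : c i ^ 2 = 1 := (QuotientGroup.eq_one_iff _).2 ⟨_, rfl⟩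
  have hinj : Function.Injective (prodPowHom 2 c hc) := by
    rw [injective_iff_map_eq_one]
    intro v hv
    have hmem : ∏ i, ClassGroup.mk0 (I i) ^ (v.toAdd i).val ∈
        (powMonoidHom 2 : ClassGroup S →* ClassGroup S).range := by
      rw [← QuotientGroup.eq_one_iff, ← QuotientGroup.mk'_apply, map_prod]
      simp only [map_pow]
      exact hv
    obtain ⟨u, α, δ, hδ, h⟩ := exists_norm_eq_mul_norm_of_mk0_prod_mem_range hI hmem
    refine Multiplicative.toAdd.injective (funext fun i ↦ ?_)
    refine eq_zero_of_isSquare_prod hdiag htri (v := v.toAdd) (fun i ↦ ?_) i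
    rw [← isSquare_mul_iff_right (hunit i u) (u.isUnit.map (φ i)).ne_zero, ← map_mul]
    exact hnorm i _ α δ hδ h
  simpa [Nat.card_eq_fintype_card] using Nat.card_le_card_of_injective _ hinj

end LowerBound

end QuadraticConj

/-! ### Auxiliary primes -/

/-- Thue's lemma. -/
theorem exists_intCast_eq_mul_of_not_isSquare {q : ℕ} [NeZero q] (hq : ¬ IsSquare q)
    (c : ZMod q) :
    ∃ x y : ℤ, (x ≠ 0 ∨ y ≠ 0) ∧ x ^ 2 < q ∧ y ^ 2 < q ∧ (x : ZMod q) = c * y := by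
  have hlt : Nat.sqrt q ^ 2 < q := by
    refine lt_of_le_of_ne (Nat.sqrt_le' q) fun h ↦ hq ⟨Nat.sqrt q, ?_⟩
    rw [← sq, h]
  obtain ⟨⟨a, b⟩, hab, ⟨a', b'⟩, hab', hne, heq⟩ :=
    Finset.exists_ne_map_eq_of_card_lt_of_maps_to
      (s := Finset.range (Nat.sqrt q + 1) ×ˢ Finset.range (Nat.sqrt q + 1))
      (t := (Finset.univ : Finset (ZMod q))) (f := fun z ↦ (z.1 : ZMod q) - c * z.2)
      (by simpa [ZMod.card] using Nat.lt_succ_sqrt q) (fun _ _ ↦ Finset.mem_univ _)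
  simp only [Finset.mem_product, Finset.mem_range] at hab hab'
  have sq_lt {m n : ℕ} (hm : m < Nat.sqrt q + 1) (hn : n < Nat.sqrt q + 1) :
      ((m : ℤ) - n) ^ 2 < q := by
    have habs : |(m : ℤ) - n| ≤ |(Nat.sqrt q : ℤ)| := by
      rw [abs_of_nonneg (Int.natCast_nonneg (Nat.sqrt q)), abs_le]
      constructor <;> omega
    exact (sq_le_sq.2 habs).trans_lt (by exact_mod_cast hlt)
  refine ⟨a - a', b - b', ?_, sq_lt hab.1 hab'.1, sq_lt hab.2 hab'.2, ?_⟩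
  · contrapose! hne
    exact Prod.ext (by simp only; omega) (by simp only; omega)
  · push_cast
    linear_combination heq

theorem exists_sq_add_two_mul_sq_eq {q : ℕ} [NeZero q] (hq : ¬ IsSquare q) {c : ZMod q}
    (hc : c * c = -2) : ∃ a b : ℤ, a ^ 2 + 2 * b ^ 2 = q := by
  obtain ⟨x, y, hne, hx, hy, hxy⟩ := exists_intCast_eq_mul_of_not_isSquare hq c
  have hpos : 0 < x ^ 2 + 2 * y ^ 2 := by
    rcases hne with h | h <;> positivity
  obtain ⟨k, hk⟩ : (q : ℤ) ∣ x ^ 2 + 2 * y ^ 2 := by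
    rw [← ZMod.intCast_zmod_eq_zero_iff_dvd]
    push_cast
    rw [hxy]
    linear_combination (y : ZMod q) ^ 2 * hc
  have hk_pos : 0 < k := by by_contra! h; nlinarith
  have hk_lt : k < 3 := by by_contra! h; nlinarith
  interval_cases k
  · exact ⟨x, y, by rw [hk, mul_one]⟩
  · obtain ⟨z, rfl⟩ : (2 : ℤ) ∣ x :=
      Int.prime_two.dvd_of_dvd_pow (n := 2) ⟨q - y ^ 2, by linarith⟩
    exact ⟨y, z, by linarith⟩

theorem exists_prime_modEq_and_not_isSquare {p : ℕ} [hp : Fact p.Prime] (hp2 : p ≠ 2) {m a : ℕ}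
    (hm : m ≠ 0) (hmp : m.Coprime p) (ha : a.Coprime m) :
    ∃ q : ℕ, q.Prime ∧ q ≡ a [MOD m] ∧ ¬ IsSquare (q : ZMod p) := by
  obtain ⟨r, hr⟩ := FiniteField.exists_nonsquare (F := ZMod p) (by rwa [ZMod.ringChar_zmod_n])
  obtain ⟨k, hkm, hkp⟩ := Nat.chineseRemainder hmp a r.val
  have hkr : (k : ZMod p) = r := by
    rw [← ZMod.natCast_zmod_val r]
    exact (ZMod.natCast_eq_natCast_iff _ _ _).2 hkp
  have hk : k.Coprime (m * p) := by
    refine Nat.Coprime.mul_right (by rw [Nat.Coprime, hkm.gcd_eq]; exact ha) ?_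
    rw [← ZMod.isUnit_iff_coprime, hkr, isUnit_iff_ne_zero]
    exact fun h ↦ hr (h ▸ IsSquare.zero)
  obtain ⟨q, -, hq, hqk⟩ :=
    Nat.forall_exists_prime_gt_and_modEq 0 (mul_ne_zero hm hp.out.ne_zero) hk
  refine ⟨q, hq, (hqk.of_mul_right p).trans hkm, ?_⟩
  rwa [(ZMod.natCast_eq_natCast_iff _ _ _).2 (hqk.of_mul_left m), hkr]

theorem isSquare_mul_of_not_isSquare {F : Type*} [Field F] [Finite F] {a b : F}
    (ha : ¬ IsSquare a) (hb : ¬ IsSquare b) : IsSquare (a * b) := by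
  classical
  have := Fintype.ofFinite F
  have hchar : ringChar F ≠ 2 := fun h ↦ ha (FiniteField.isSquare_of_char_two h a)
  have ha0 : a ≠ 0 := fun h ↦ ha (h ▸ IsSquare.zero)
  have hb0 : b ≠ 0 := fun h ↦ hb (h ▸ IsSquare.zero)
  rw [← quadraticChar_neg_one_iff_not_isSquare] at ha hb
  rw [← quadraticChar_one_iff_isSquare (mul_ne_zero ha0 hb0), map_mul, ha, hb, neg_one_mul,
    neg_neg]

theorem isCoprime_four_mul {p q : ℕ} (hp : p.Prime) (hq : q.Prime) (hq2 : q ≠ 2) (hqp : q ≠ p) :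
    IsCoprime (q : ℤ) (4 * p) := by
  have h4 : q.Coprime (2 ^ 2) := ((Nat.coprime_primes hq Nat.prime_two).2 hq2).pow_right 2
  exact_mod_cast Nat.isCoprime_iff_coprime.2
    (h4.mul_right ((Nat.coprime_primes hq hp).2 hqp))

theorem exists_prime_mod_eight_and_not_isSquare {p : ℕ} [hp : Fact p.Prime] (hp8 : p % 8 = 1)
    {a : ℕ} (ha : a.Coprime 8) (ha1 : a % 8 ≠ 1) :
    ∃ q : ℕ, q.Prime ∧ q % 8 = a % 8 ∧ ¬ IsSquare (q : ZMod p) ∧ ¬ IsSquare (p : ZMod q) ∧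
      q ≠ 2 ∧ IsCoprime (q : ℤ) (4 * p) := by
  have hp2 : p ≠ 2 := by rintro rfl; omega
  have h8p : Nat.Coprime 8 p :=
    Nat.Coprime.pow_left 3 ((Nat.coprime_primes Nat.prime_two hp.out).2 hp2.symm)
  obtain ⟨q, hq, hqa, hqp⟩ := exists_prime_modEq_and_not_isSquare hp2 (by norm_num) h8p ha
  have hqa : q % 8 = a % 8 := hqa
  have hq2 : q ≠ 2 := by
    rintro rfl
    have : Nat.Coprime 2 a := (Nat.Coprime.coprime_dvd_right (by norm_num) ha).symm
    rw [Nat.coprime_two_left, Nat.odd_iff] at this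
    omega
  have : Fact q.Prime := ⟨hq⟩
  refine ⟨q, hq, hqa, hqp, ?_, hq2, isCoprime_four_mul hp.out hq hq2 (by rintro rfl; omega)⟩
  rwa [← ZMod.exists_sq_eq_prime_iff_of_mod_four_eq_one (p := p) (q := q) (by omega) hq2]

/-- Since `2` and `p` are nonresidues modulo `q ≡ 5 (mod 8)`, their product is a residue. -/
theorem exists_sq_add_sq_not_isSquare {p : ℕ} [Fact p.Prime] (hp8 : p % 8 = 1) :
    ∃ q a b n : ℤ, a ^ 2 + b ^ 2 = q ∧ IsCoprime q (4 * p) ∧ q ∣ 2 * n ^ 2 - p ∧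
      ¬ IsSquare (q : ZMod p) := by
  obtain ⟨q, hq, hq8, hqp, hpq, hq2, hco⟩ :=
    exists_prime_mod_eight_and_not_isSquare hp8 (a := 5) (by norm_num) (by norm_num)
  have : Fact q.Prime := ⟨hq⟩
  obtain ⟨a, b, hab⟩ := Nat.Prime.sq_add_sq (p := q) (by omega)
  have h2 : ¬ IsSquare (2 : ZMod q) := by rw [ZMod.exists_sq_eq_two_iff hq2]; omega
  have h20 : (2 : ZMod q) ≠ 0 := fun h ↦ h2 (h ▸ IsSquare.zero)
  obtain ⟨y, hy⟩ := isSquare_mul_of_not_isSquare h2 hpq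
  refine ⟨q, a, b, (y / 2).val, by exact_mod_cast hab, hco, ?_, by simpa using hqp⟩
  rw [← ZMod.intCast_zmod_eq_zero_iff_dvd]
  push_cast
  rw [ZMod.natCast_zmod_val]
  field_simp
  linear_combination -hy

/-- Since `-1` and `p` are nonresidues modulo `q ≡ 3 (mod 8)`, their product is a residue. -/
theorem exists_sq_add_two_mul_sq_not_isSquare {p : ℕ} [Fact p.Prime] (hp8 : p % 8 = 1) :
    ∃ q a b n : ℤ, a ^ 2 + 2 * b ^ 2 = q ∧ IsCoprime q (4 * p) ∧ q ∣ -n ^ 2 - p ∧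
      ¬ IsSquare (q : ZMod p) := by
  obtain ⟨q, hq, hq8, hqp, hpq, hq2, hco⟩ :=
    exists_prime_mod_eight_and_not_isSquare hp8 (a := 3) (by norm_num) (by norm_num)
  have : Fact q.Prime := ⟨hq⟩
  have h1 : ¬ IsSquare (-1 : ZMod q) := by rw [ZMod.exists_sq_eq_neg_one_iff]; omega
  obtain ⟨c, hc⟩ := (ZMod.exists_sq_eq_neg_two_iff hq2).2 (by omega)
  obtain ⟨a, b, hab⟩ := exists_sq_add_two_mul_sq_eq hq.prime.not_isSquare hc.symm
  obtain ⟨y, hy⟩ := isSquare_mul_of_not_isSquare h1 hpq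
  refine ⟨q, a, b, y.val, hab, hco, ?_, by simpa using hqp⟩
  rw [← ZMod.intCast_zmod_eq_zero_iff_dvd]
  push_cast
  rw [ZMod.natCast_zmod_val]
  linear_combination hy

/-! ### Biquadratic symbols -/

section Biquadratic

variable {p : ℕ} [hp : Fact p.Prime]

theorem exists_pow_four_eq_neg_one (hp8 : p % 8 = 1) : ∃ g : ZMod p, g ^ 4 = -1 := by
  have hp2 : p ≠ 2 := by rintro rfl; omega
  obtain ⟨r, hr⟩ := FiniteField.exists_nonsquare (F := ZMod p) (by rwa [ZMod.ringChar_zmod_n])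
  have hr0 : r ≠ 0 := fun h ↦ hr (h ▸ IsSquare.zero)
  refine ⟨r ^ (p / 8), ?_⟩
  rw [← pow_mul, show p / 8 * 4 = p / 2 by omega]
  exact (ZMod.pow_div_two_eq_neg_one_or_one p hr0).resolve_left
    fun h ↦ hr ((ZMod.euler_criterion p hr0).2 h)

theorem two_ne_zero_of_mod_eight_eq_one (hp8 : p % 8 = 1) : (2 : ZMod p) ≠ 0 :=
  mod_cast ZMod.prime_ne_zero p 2 (by omega)

variable {g : ZMod p}

theorem ne_zero_of_pow_four_eq_neg_one (hg : g ^ 4 = -1) : g ≠ 0 := by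
  rintro rfl
  simp at hg

theorem isSquare_iff_of_pow_four_eq_neg_one (hp8 : p % 8 = 1) (hg : g ^ 4 = -1) :
    IsSquare g ↔ (-1 : ℤ) ^ ((p - 1) / 8) = 1 := by
  have : Fact (2 < p) := ⟨by have := hp.out.two_le; omega⟩
  rw [ZMod.euler_criterion p (ne_zero_of_pow_four_eq_neg_one hg),
    show p / 2 = 4 * ((p - 1) / 8) by omega, pow_mul, hg, neg_one_pow_eq_one_iff_even,
    neg_one_pow_eq_one_iff_even]
  · norm_num
  · exact ZMod.neg_one_ne_one

theorem sub_pow_three_sq (hg : g ^ 4 = -1) : (g - g ^ 3) ^ 2 = 2 := by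
  linear_combination (g ^ 2 - 2) * hg

theorem sub_pow_three_ne_zero (hp8 : p % 8 = 1) (hg : g ^ 4 = -1) : g - g ^ 3 ≠ 0 :=
  ne_zero_pow two_ne_zero (sub_pow_three_sq hg ▸ two_ne_zero_of_mod_eight_eq_one hp8)

theorem isSquare_sub_pow_three_iff (hp8 : p % 8 = 1) (hg : g ^ 4 = -1) :
    IsSquare (g - g ^ 3) ↔ (2 : ZMod p) ^ ((p - 1) / 4) = 1 := by
  rw [ZMod.euler_criterion p (sub_pow_three_ne_zero hp8 hg),
    show p / 2 = 2 * ((p - 1) / 4) by omega, pow_mul, sub_pow_three_sq hg]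

/-- Modulo `p`, `g` is an eighth root of unity and `g - g ^ 3` is `√2`; the equivalence rests on
the identity `g √2 (1 + √2) = (1 + g)²`. -/
theorem biquadratic_symbols_eq_one_iff (hp8 : p % 8 = 1) (hg : g ^ 4 = -1) :
    ((2 : ZMod p) ^ ((p - 1) / 4) = 1 ∧ (-1 : ℤ) ^ ((p - 1) / 8) = 1) ↔
      IsSquare g ∧ IsSquare (1 + g - g ^ 3) := by
  rw [← isSquare_iff_of_pow_four_eq_neg_one hp8 hg, ← isSquare_sub_pow_three_iff hp8 hg, and_comm]
  refine and_congr_right fun hsq ↦ ?_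
  have hprod : IsSquare ((g - g ^ 3) * (1 + g - g ^ 3)) := by
    rw [← isSquare_mul_iff_right hsq (ne_zero_of_pow_four_eq_neg_one hg)]
    exact ⟨1 + g, by linear_combination (g ^ 3 - 2 * g - 1) * hg⟩
  have hunit : 1 + g - g ^ 3 ≠ 0 := by
    intro h
    have h1 : (1 : ZMod p) = 0 := by
      linear_combination (g - g ^ 3 - 1) * h - sub_pow_three_sq hg
    exact one_ne_zero h1
  refine ⟨fun h ↦ (isSquare_mul_iff_right h (sub_pow_three_ne_zero hp8 hg)).1 hprod, fun h ↦ ?_⟩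
  rwa [mul_comm, isSquare_mul_iff_right h hunit] at hprod

end Biquadratic

/-! ### Powers in finitely generated abelian groups -/

section FinitelyGenerated

open Module

theorem finrank_range_add_finrank_ker_of_isDomain {R M N : Type*} [CommRing R] [IsDomain R]
    [AddCommGroup M] [Module R M] [Module.Finite R M] [AddCommGroup N] [Module R N]
    (f : M →ₗ[R] N) :
    finrank R f.range + finrank R f.ker = finrank R M := by
  rw [← f.ker.finrank_quotient_add_finrank, f.quotKerEquivRange.finrank_eq]

theorem finrank_prod_of_isTorsion {R M N : Type*} [CommRing R] [IsDomain R] [AddCommGroup M]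
    [Module R M] [Module.Finite R M] [AddCommGroup N] [Module R N] [Module.Finite R N]
    (hN : Module.IsTorsion R N) : finrank R (M × N) = finrank R M := by
  have hker : finrank R (LinearMap.fst R M N).ker = 0 := by
    rw [LinearMap.ker_fst, (LinearEquiv.ofInjective _ LinearMap.inr_injective).symm.finrank_eq,
      hN.finrank_eq_zero]
  rw [← finrank_range_add_finrank_ker_of_isDomain (LinearMap.fst R M N), hker, add_zero,
    LinearMap.range_eq_top.2 Prod.fst_surjective, finrank_top]

theorem index_range_nsmul_of_equiv_prod {A L T : Type*} [AddCommGroup A] [AddCommGroup L]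
    [AddCommGroup T] [Finite T] [Module.Free ℤ L] [Module.Finite ℤ L] (f : A ≃+ L × T) {n : ℕ}
    (hn : n ≠ 0) :
    (nsmulAddMonoidHom n : A →+ A).range.index =
      n ^ finrank ℤ A * Nat.card (nsmulAddMonoidHom n : A →+ A).ker := by
  have hT : Module.IsTorsion ℤ T := fun {t} ↦
    ⟨⟨addOrderOf t, by simp [addOrderOf_eq_zero_iff, isOfFinAddOrder_of_finite]⟩, by simp⟩
  have hprod : (nsmulAddMonoidHom n : L × T →+ L × T) =
      (nsmulAddMonoidHom n : L →+ L).prodMap (nsmulAddMonoidHom n : T →+ T) := rfl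
  have hmap : (nsmulAddMonoidHom n : A →+ A).ker.map (f : A →+ L × T) =
      (nsmulAddMonoidHom n : L × T →+ L × T).ker := by
    ext x
    refine AddSubgroup.mem_map_equiv.trans ?_
    rw [AddMonoidHom.mem_ker, AddMonoidHom.mem_ker, nsmulAddMonoidHom_apply,
      nsmulAddMonoidHom_apply, ← map_nsmul, map_eq_zero_iff _ f.symm.injective]
  have hker : Nat.card (nsmulAddMonoidHom n : A →+ A).ker =
      Nat.card (nsmulAddMonoidHom n : T →+ T).ker := by
    rw [Nat.card_congr (f.addSubgroupMap _).toEquiv, hmap, hprod,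
      AddMonoidHom.ker_prodMap, (AddMonoidHom.ker_eq_bot_iff _).2
        (AddSubgroup.nsmulAddMonoidHom_injective_of_isTorsionFree hn),
      Nat.card_congr (AddSubgroup.prodEquiv _ _).toEquiv, Nat.card_prod, AddSubgroup.card_bot,
      one_mul]
  rw [hker, f.toIntLinearEquiv.finrank_eq, finrank_prod_of_isTorsion hT,
    ← AddSubgroup.index_map_equiv _ f, AddEquiv.map_range_nsmulAddMonoidHom, hprod,
    AddMonoidHom.range_prodMap, AddSubgroup.index_prod, AddSubgroup.index_range_nsmul,
    AddSubgroup.index_range]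

theorem index_range_nsmul_of_fg (A : Type*) [AddCommGroup A] [AddGroup.FG A] {n : ℕ}
    (hn : n ≠ 0) :
    (nsmulAddMonoidHom n : A →+ A).range.index =
      n ^ finrank ℤ A * Nat.card (nsmulAddMonoidHom n : A →+ A).ker := by
  obtain ⟨r, ι, _, p, hp, e, ⟨f⟩⟩ := AddCommGroup.equiv_free_prod_directSum_zmod A
  have (i : ι) : NeZero (p i ^ e i) := ⟨pow_ne_zero _ (hp i).ne_zero⟩
  have : Finite (DirectSum ι fun i ↦ ZMod (p i ^ e i)) :=
    Finite.of_equiv _ (DirectSum.addEquivProd (fun i ↦ ZMod (p i ^ e i))).symm.toEquiv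
  exact index_range_nsmul_of_equiv_prod f hn

theorem index_range_pow_of_fg (A : Type*) [CommGroup A] [Group.FG A] {n : ℕ} (hn : n ≠ 0) :
    (powMonoidHom n : A →* A).range.index =
      n ^ finrank ℤ (Additive A) * Nat.card (powMonoidHom n : A →* A).ker :=
  index_range_nsmul_of_fg (Additive A) hn

theorem finrank_ker_add_finrank_of_pow_mem_range {A B : Type*} [CommGroup A] [CommGroup B]
    [Group.FG A] [Group.FG B] (f : A →* B) {n : ℕ} (hn : n ≠ 0) (hf : ∀ b : B, b ^ n ∈ f.range) :
    finrank ℤ (Additive f.ker) + finrank ℤ (Additive B) = finrank ℤ (Additive A) := by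
  have : Module.Finite ℤ (Additive A) := Module.Finite.iff_addGroup_fg.2 inferInstance
  have : Module.Finite ℤ (Additive B) := Module.Finite.iff_addGroup_fg.2 inferInstance
  let F : Additive A →ₗ[ℤ] Additive B := (MonoidHom.toAdditive f).toIntLinearMap
  have hker : finrank ℤ F.ker = finrank ℤ (Additive f.ker) := rfl
  have hquot : finrank ℤ (Additive B ⧸ F.range) = 0 := by
    refine Module.IsTorsion.finrank_eq_zero fun {x} ↦ ?_
    obtain ⟨b, rfl⟩ := F.range.mkQ_surjective x
    obtain ⟨a, ha⟩ := hf b.toMul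
    refine ⟨⟨n, by simpa using hn⟩, (Submodule.Quotient.mk_eq_zero _).2 ⟨Additive.ofMul a, ?_⟩⟩
    calc F (Additive.ofMul a) = Additive.ofMul (b.toMul ^ n) := congrArg Additive.ofMul ha
      _ = (n : ℤ) • b := by rw [ofMul_pow, ofMul_toMul, natCast_zsmul]
  have h1 := F.range.finrank_quotient_add_finrank
  have h2 := finrank_range_add_finrank_ker_of_isDomain F
  omega

end FinitelyGenerated

/-! ### Cyclotomic integers -/

section CyclotomicLift

variable {n : ℕ} [NeZero n] {F : Type*} [Field F] [NumberField F] [IsCyclotomicExtension {n} ℚ F]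
  {ζ : F} (hζ : IsPrimitiveRoot ζ n) {k : Type*} [CommRing k] [IsDomain k] {g : k}

theorem aeval_minpoly_integralPowerBasis_gen (hg : IsPrimitiveRoot g n) :
    Polynomial.aeval g (minpoly ℤ hζ.integralPowerBasis.gen) = 0 := by
  have hmin : minpoly ℤ hζ.toInteger = Polynomial.cyclotomic n ℤ := by
    rw [Polynomial.cyclotomic_eq_minpoly hζ (NeZero.pos n)]
    exact (minpoly.algebraMap_eq RingOfIntegers.coe_injective hζ.toInteger).symm
  rw [hζ.integralPowerBasis_gen, hmin, Polynomial.aeval_def, ← Polynomial.eval_map,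
    Polynomial.map_cyclotomic]
  exact hg.isRoot_cyclotomic (NeZero.pos n)

/-- The reduction map `ℤ[ζₙ] → k` with `ζₙ ↦ g`, where `g` is a primitive `n`-th root of unity of
the domain `k`. -/
def cyclotomicLift (hg : IsPrimitiveRoot g n) : 𝓞 F →+* k :=
  (hζ.integralPowerBasis.lift g (aeval_minpoly_integralPowerBasis_gen hζ hg)).toRingHom

@[simp]
theorem cyclotomicLift_toInteger (hg : IsPrimitiveRoot g n) :
    cyclotomicLift hζ hg hζ.toInteger = g :=
  (congrArg _ hζ.integralPowerBasis_gen.symm).trans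
    (hζ.integralPowerBasis.lift_gen g (aeval_minpoly_integralPowerBasis_gen hζ hg))

end CyclotomicLift

section EighthRoots

theorem isPrimitiveRoot_eight_of_pow_four_eq_neg_one {k : Type*} [CommRing k] [NeZero (2 : k)]
    {g : k} (hg : g ^ 4 = -1) : IsPrimitiveRoot g 8 := by
  have : Fact (Nat.Prime 2) := ⟨Nat.prime_two⟩
  have hne : ¬g ^ 2 ^ 2 = 1 := fun h ↦ two_ne_zero (α := k) (by linear_combination hg - h)
  have hone : g ^ 2 ^ (2 + 1) = 1 := by linear_combination (g ^ 4 - 1) * hg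
  rw [← show orderOf g = 8 from orderOf_eq_prime_pow hne hone]
  exact IsPrimitiveRoot.orderOf g

theorem pow_four_eq_neg_one_of_isPrimitiveRoot_eight {k : Type*} [CommRing k] [IsDomain k] {g : k}
    (hg : IsPrimitiveRoot g 8) : g ^ 4 = -1 :=
  (hg.pow (by norm_num) (by norm_num : 8 = 4 * 2)).eq_neg_one_of_two_right

variable {F : Type*} [Field F] [NumberField F] [IsCyclotomicExtension {8} ℚ F]

theorem isPrincipalIdealRing_of_isCyclotomicExtension_eight : IsPrincipalIdealRing (𝓞 F) := by
  have : Fact (Nat.Prime 2) := ⟨Nat.prime_two⟩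
  have : IsCyclotomicExtension {2 ^ (2 + 1)} ℚ F := ‹_›
  have hdeg : Module.finrank ℚ F = 4 := by rw [IsCyclotomicExtension.Rat.finrank 8 F]; decide
  have hdiscr : discr F = 256 := by
    rw [IsCyclotomicExtension.Rat.discr_prime_pow_succ 2 2 F]
    norm_num
  have hplaces : InfinitePlace.nrComplexPlaces F = 2 := by
    rw [IsCyclotomicExtension.Rat.nrComplexPlaces_eq_totient_div_two 8 F]; decide
  have hminkowski : ⌊(4 / Real.pi) ^ InfinitePlace.nrComplexPlaces F *
      ((Module.finrank ℚ F).factorial / (Module.finrank ℚ F : ℝ) ^ (Module.finrank ℚ F) *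
        √|(discr F : ℝ)|)⌋₊ ≤ 2 := by
    have hsqrt : √|((256 : ℤ) : ℝ)| = 16 := by
      rw [show |((256 : ℤ) : ℝ)| = 16 ^ 2 by norm_num, Real.sqrt_sq (by norm_num)]
    refine Nat.le_of_lt_succ ((Nat.floor_lt (by positivity)).2 ?_)
    rw [hdeg, hdiscr, hplaces, hsqrt, show Nat.factorial 4 = 24 from rfl, div_pow,
      div_mul_eq_mul_div, div_lt_iff₀ (by positivity)]
    push_cast
    nlinarith [Real.pi_gt_three]
  refine
    RingOfIntegers.isPrincipalIdealRing_of_isPrincipal_of_pow_le_of_mem_primesOver_of_mem_Icc ?_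
  rintro q hq hq' P ⟨_, hP⟩ -
  obtain rfl : q = 2 := le_antisymm ((Finset.mem_Icc.1 hq).2.trans hminkowski) hq'.two_le
  have hζ := IsCyclotomicExtension.zeta_spec (2 ^ (2 + 1)) ℚ F
  exact ⟨_, IsCyclotomicExtension.Rat.eq_span_zeta_sub_one_of_liesOver 2 2 F hζ P⟩

end EighthRoots

section Units

theorem card_ker_powMonoidHom_two {A G : Type*} [CommRing A] [IsDomain A] [NeZero (2 : A)]
    [CommGroup G] {f : G →* A} (hf : Function.Injective f) {e : G} (he : f e = -1) :
    Nat.card (powMonoidHom 2 : G →* G).ker = 2 := by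
  have hsq : e ^ 2 = 1 := hf (by rw [map_pow, he, map_one, neg_one_sq])
  have hne : e ≠ 1 := fun h ↦ two_ne_zero (α := A) (by
    rw [h, map_one] at he
    linear_combination he)
  refine Nat.card_eq_two_iff.2 ⟨1, ⟨e, hsq⟩, fun h ↦ hne (Subtype.ext_iff.1 h).symm, ?_⟩
  refine Set.eq_univ_of_forall fun x ↦ ?_
  have hx : f x.1 ^ 2 = 1 := by rw [← map_pow, show x.1 ^ 2 = 1 from x.2, map_one]
  rcases sq_eq_one_iff.1 hx with h | h
  · exact Or.inl (Subtype.ext (hf (h.trans (map_one f).symm)))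
  · exact Or.inr (Subtype.ext (hf (h.trans he.symm)))

theorem group_fg_of_subgroup {A : Type*} [CommGroup A] [Group.FG A] (H : Subgroup A) :
    Group.FG H := by
  have hA : Module.Finite ℤ (Additive A) := Module.Finite.iff_addGroup_fg.2 inferInstance
  have hH : Module.Finite ℤ (AddSubgroup.toIntSubmodule (Subgroup.toAddSubgroup H)) := inferInstance
  exact GroupFG.iff_add_fg.2 (Module.Finite.iff_addGroup_fg.1 hH)

theorem finrank_units_of_isTotallyComplex (K : Type*) [Field K] [NumberField K] [IsTotallyComplex K]
    {m : ℕ} (h : Module.finrank ℚ K = 2 * m) :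
    Module.finrank ℤ (Additive (𝓞 K)ˣ) = m - 1 := by
  have hplaces := InfinitePlace.card_add_two_mul_card_eq_rank K
  rw [Units.finrank_eq, Units.rank, InfinitePlace.card_eq_nrRealPlaces_add_nrComplexPlaces]
  rw [IsTotallyComplex.nrRealPlaces_eq_zero K] at *
  omega

/-- The units of `R` on which the multiplicative map `χ` takes a square value. -/
def squareUnits {R k : Type*} [Monoid R] [CommMonoid k] (χ : R →* k) : Subgroup Rˣ where
  carrier := {u | IsSquare (χ u)}
  one_mem' := by simp
  mul_mem' {u v} hu hv := by simpa using IsSquare.mul hu hv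
  inv_mem' {u} hu := by
    obtain ⟨r, hr⟩ := id hu
    refine ⟨χ ↑u⁻¹ * r, ?_⟩
    rw [mul_mul_mul_comm, ← hr, mul_assoc, ← map_mul, Units.inv_mul, map_one, mul_one]

@[simp]
theorem mem_squareUnits {R k : Type*} [Monoid R] [CommMonoid k] {χ : R →* k} {u : Rˣ} :
    u ∈ squareUnits χ ↔ IsSquare (χ u) :=
  Iff.rfl

theorem range_powMonoidHom_two_le_squareUnits {R k : Type*} [CommMonoid R] [CommMonoid k]
    (χ : R →* k) : (powMonoidHom 2 : Rˣ →* Rˣ).range ≤ squareUnits χ := by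
  rintro _ ⟨u, rfl⟩
  simpa using IsSquare.sq (χ u)

/-- An eighth root of unity `z`, as a unit. -/
@[simps]
def eighthRootUnit {A : Type*} [CommRing A] {z : A} (hz : z ^ 4 = -1) : Aˣ where
  val := z
  inv := -z ^ 3
  val_inv := by linear_combination -hz
  inv_val := by linear_combination -hz

/-- The unit `1 + √2 = 1 + z - z ^ 3`, where `z` is an eighth root of unity. -/
@[simps]
def onePlusSqrtTwoUnit {A : Type*} [CommRing A] {z : A} (hz : z ^ 4 = -1) : Aˣ where
  val := 1 + z - z ^ 3
  inv := z - z ^ 3 - 1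
  val_inv := by linear_combination (z ^ 2 - 2) * hz
  inv_val := by linear_combination (z ^ 2 - 2) * hz

theorem two_mul_index_le_index_of_lt {G : Type*} [Group G] {H K : Subgroup G} [H.FiniteIndex]
    (hHK : H < K) : 2 * K.index ≤ H.index := by
  have hmul := H.relIndex_mul_index hHK.le
  have hne : H.relIndex K ≠ 1 := fun h ↦ hHK.not_ge (Subgroup.relIndex_eq_one.1 h)
  have hpos : H.relIndex K ≠ 0 := left_ne_zero_of_mul (hmul ▸ Subgroup.FiniteIndex.index_ne_zero)
  rw [← hmul]
  gcongr
  omega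

theorem toInteger_pow_four {F : Type*} [Field F] {ζ : F} (hζ : IsPrimitiveRoot ζ 8) :
    hζ.toInteger ^ 4 = -1 :=
  pow_four_eq_neg_one_of_isPrimitiveRoot_eight hζ.toInteger_isPrimitiveRoot

variable {F : Type*} [Field F] [NumberField F] [IsCyclotomicExtension {8} ℚ F]

theorem finrank_units_of_isCyclotomicExtension_eight :
    Module.finrank ℤ (Additive (𝓞 F)ˣ) = 1 := by
  have : IsTotallyComplex F :=
    IsCyclotomicExtension.Rat.isTotallyComplex F (n := 8) (by norm_num)
  refine finrank_units_of_isTotallyComplex F (m := 2) ?_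
  rw [IsCyclotomicExtension.Rat.finrank 8 F]
  rfl

theorem index_sq_units_of_isCyclotomicExtension_eight :
    (powMonoidHom 2 : (𝓞 F)ˣ →* (𝓞 F)ˣ).range.index = 4 := by
  have : Group.FG (𝓞 F)ˣ := Group.fg_iff_monoid_fg.2 inferInstance
  rw [index_range_pow_of_fg _ two_ne_zero, finrank_units_of_isCyclotomicExtension_eight,
    card_ker_powMonoidHom_two (f := Units.coeHom (𝓞 F)) Units.val_injective (e := -1) rfl]
  norm_num

/-- The characters modulo `17` and `41` with `ζ₈ ↦ 2` and `ζ₈ ↦ 3` separate the classes of `ζ₈` and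
`1 + √2` modulo squares. -/
theorem eq_top_of_eighthRootUnit_mem {ζ : F} (hζ : IsPrimitiveRoot ζ 8) {M : Subgroup (𝓞 F)ˣ}
    (hM : (powMonoidHom 2).range ≤ M) (hroot : eighthRootUnit (toInteger_pow_four hζ) ∈ M)
    (hsqrt : onePlusSqrtTwoUnit (toInteger_pow_four hζ) ∈ M) : M = ⊤ := by
  have hroot17 : IsPrimitiveRoot (2 : ZMod 17) 8 :=
    have : NeZero (2 : ZMod 17) := ⟨by decide⟩
    isPrimitiveRoot_eight_of_pow_four_eq_neg_one (by decide)
  have hroot41 : IsPrimitiveRoot (3 : ZMod 41) 8 :=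
    have : NeZero (2 : ZMod 41) := ⟨by decide⟩
    isPrimitiveRoot_eight_of_pow_four_eq_neg_one (by decide)
  have hsq17 : IsSquare (2 : ZMod 17) ∧ ¬ IsSquare (1 + 2 - 2 ^ 3 : ZMod 17) := by decide +kernel
  have hsq41 : ¬ IsSquare (3 : ZMod 41) := by decide +kernel
  have : Fact (Nat.Prime 17) := ⟨by norm_num⟩
  have : Fact (Nat.Prime 41) := ⟨by norm_num⟩
  set χ : 𝓞 F →* ZMod 17 := (cyclotomicLift hζ hroot17 : 𝓞 F →* ZMod 17) with hχ
  set χ' : 𝓞 F →* ZMod 41 := (cyclotomicLift hζ hroot41 : 𝓞 F →* ZMod 41) with hχ'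
  have hlt : (powMonoidHom 2).range < squareUnits χ ⊓ M := by
    refine (le_inf (range_powMonoidHom_two_le_squareUnits χ) hM).lt_of_not_ge fun h ↦ hsq41 ?_
    have := range_powMonoidHom_two_le_squareUnits χ' (h ⟨by simpa [hχ] using hsq17.1, hroot⟩)
    simpa [hχ'] using this
  have hlt' : squareUnits χ ⊓ M < M := by
    refine inf_le_right.lt_of_not_ge fun h ↦ hsq17.2 ?_
    simpa [hχ] using (h hsqrt).1
  have hindex := index_sq_units_of_isCyclotomicExtension_eight (F := F)
  have : (powMonoidHom 2 : (𝓞 F)ˣ →* (𝓞 F)ˣ).range.FiniteIndex := ⟨by omega⟩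
  have : (squareUnits χ ⊓ M).FiniteIndex := Subgroup.finiteIndex_of_le hlt.le
  have : M.FiniteIndex := Subgroup.finiteIndex_of_le hM
  have hindex_inf := two_mul_index_le_index_of_lt hlt
  have hindex_M := two_mul_index_le_index_of_lt hlt'
  have hpos : M.index ≠ 0 := Subgroup.FiniteIndex.index_ne_zero
  exact Subgroup.index_eq_one.1 (by omega)

theorem isSquare_map_unit {ζ : F} (hζ : IsPrimitiveRoot ζ 8) {k : Type*} [CommMonoid k]
    {χ : 𝓞 F →* k} (hroot : IsSquare (χ hζ.toInteger))
    (hsqrt : IsSquare (χ (1 + hζ.toInteger - hζ.toInteger ^ 3))) (u : (𝓞 F)ˣ) :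
    IsSquare (χ u) := by
  have htop : squareUnits χ = ⊤ :=
    eq_top_of_eighthRootUnit_mem hζ (range_powMonoidHom_two_le_squareUnits χ) hroot hsqrt
  exact mem_squareUnits.1 (htop ▸ Subgroup.mem_top u)

end Units

namespace QuadraticConj

theorem relIndex_sq_ker_normUnits {R S : Type*} [CommRing R] [CommRing S] [IsDomain S]
    [NeZero (2 : S)] [Algebra R S] [FaithfulSMul R S] [Group.FG Rˣ] [Group.FG Sˣ]
    (σ : QuadraticConj R S) {r : ℕ}
    (hrank : Module.finrank ℤ (Additive Sˣ) = r + Module.finrank ℤ (Additive Rˣ)) :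
    (σ.normUnits.ker.map (powMonoidHom 2)).relIndex σ.normUnits.ker = 2 ^ (r + 1) := by
  have : Group.FG σ.normUnits.ker := group_fg_of_subgroup _
  have hrange : (σ.normUnits.ker.map (powMonoidHom 2)).subgroupOf σ.normUnits.ker =
      (powMonoidHom 2 : σ.normUnits.ker →* σ.normUnits.ker).range := by
    ext
    simp [Subgroup.mem_subgroupOf, Subtype.ext_iff]
  have hrank_ker := finrank_ker_add_finrank_of_pow_mem_range σ.normUnits two_ne_zero
    fun u ↦ ⟨_, σ.normUnits_algebraMap u⟩
  have hneg : (-1 : Sˣ) ∈ σ.normUnits.ker := by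
    rw [mem_ker_normUnits]
    ext
    simp
  have hcard := card_ker_powMonoidHom_two
    (f := (Units.coeHom S).comp σ.normUnits.ker.subtype)
    (Units.val_injective.comp Subtype.val_injective) (e := ⟨-1, hneg⟩) rfl
  rw [Subgroup.relIndex, hrange, index_range_pow_of_fg _ two_ne_zero, hcard, pow_succ,
    show Module.finrank ℤ (Additive σ.normUnits.ker) = r by omega]

end QuadraticConj

section RelativeUnits

variable {F K : Type*} [Field F] [NumberField F] [IsCyclotomicExtension {8} ℚ F] [Field K]
  [NumberField K] [Algebra F K]

theorem relIndex_sq_ker_normUnits_of_finrank_eq_eight (hK : Module.finrank ℚ K = 8)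
    (σ : QuadraticConj (𝓞 F) (𝓞 K)) :
    (σ.normUnits.ker.map (powMonoidHom 2)).relIndex σ.normUnits.ker = 8 := by
  have : IsTotallyComplex F :=
    IsCyclotomicExtension.Rat.isTotallyComplex F (n := 8) (by norm_num)
  have : IsTotallyComplex K := isTotallyComplex_of_algebra F K
  have : Group.FG (𝓞 F)ˣ := Group.fg_iff_monoid_fg.2 inferInstance
  have : Group.FG (𝓞 K)ˣ := Group.fg_iff_monoid_fg.2 inferInstance
  refine σ.relIndex_sq_ker_normUnits (r := 2) ?_
  rw [finrank_units_of_isTotallyComplex K (m := 4) hK,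
    finrank_units_of_isCyclotomicExtension_eight]

end RelativeUnits

/-! ### Completely split primes of cyclotomic fields -/

section Split

variable {n : ℕ} [NeZero n] {F : Type*} [Field F] [NumberField F] [IsCyclotomicExtension {n} ℚ F]
  {ζ : F} (hζ : IsPrimitiveRoot ζ n) {p : ℕ} [Fact p.Prime] {g : ZMod p}

theorem natCast_dvd_of_cyclotomicLift_eq_zero (hg : IsPrimitiveRoot g n) {f : 𝓞 F}
    (hf : ∀ {h : ZMod p} (hh : IsPrimitiveRoot h n), cyclotomicLift hζ hh f = 0) :
    (p : 𝓞 F) ∣ f := by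
  obtain ⟨P, hdeg, rfl⟩ := hζ.integralPowerBasis.exists_eq_aeval f
  rw [hζ.integralPowerBasis_dim] at hdeg
  rw [hζ.integralPowerBasis_gen] at hf ⊢
  have hP : P.map (Int.castRingHom (ZMod p)) = 0 := by
    refine Polynomial.eq_zero_of_degree_lt_of_eval_finset_eq_zero (primitiveRoots n (ZMod p)) ?_ ?_
    · rw [hg.card_primitiveRoots]
      exact Polynomial.degree_map_le.trans_lt
        (Polynomial.degree_le_natDegree.trans_lt (by exact_mod_cast hdeg))
    · intro h hh
      have heval := hf (isPrimitiveRoot_of_mem_primitiveRoots hh)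
      rwa [Polynomial.aeval_def, Polynomial.hom_eval₂, cyclotomicLift_toInteger,
        RingHom.ext_int (RingHom.comp _ _) (Int.castRingHom (ZMod p)),
        ← Polynomial.eval_map] at heval
  obtain ⟨Q, rfl⟩ : Polynomial.C (p : ℤ) ∣ P := by
    rw [Polynomial.C_dvd_iff_dvd_coeff]
    intro i
    rw [← ZMod.intCast_zmod_eq_zero_iff_dvd]
    simpa using congrArg (Polynomial.coeff · i) hP
  rw [map_mul]
  exact Dvd.intro (Polynomial.aeval hζ.toInteger Q) (by simp)

theorem isRadical_natCast (hg : IsPrimitiveRoot g n) : IsRadical (p : 𝓞 F) := by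
  rintro m f ⟨c, hc⟩
  refine natCast_dvd_of_cyclotomicLift_eq_zero (IsCyclotomicExtension.zeta_spec n ℚ F) hg
    fun hh ↦ eq_zero_of_pow_eq_zero (n := m) ?_
  rw [← map_pow, hc, map_mul, map_natCast, ZMod.natCast_self, zero_mul]

theorem exists_eq_ker_cyclotomicLift (hg : IsPrimitiveRoot g n) {q : Ideal (𝓞 F)} [hq : q.IsPrime]
    (hp : (p : 𝓞 F) ∈ q) :
    ∃ (h : ZMod p) (hh : IsPrimitiveRoot h n), q = RingHom.ker (cyclotomicLift hζ hh) := by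
  have := Fintype.ofFinite {h : ZMod p // IsPrimitiveRoot h n}
  have hle : Finset.univ.inf (fun h : {h : ZMod p // IsPrimitiveRoot h n} ↦
      RingHom.ker (cyclotomicLift hζ h.2)) ≤ q := by
    intro f hf
    rw [Submodule.mem_finsetInf] at hf
    exact q.mem_of_dvd (natCast_dvd_of_cyclotomicLift_eq_zero hζ hg fun hh ↦
      hf ⟨_, hh⟩ (Finset.mem_univ _)) hp
  obtain ⟨⟨h, hh⟩, -, hker⟩ := (Ideal.IsPrime.inf_le' hq).1 hle
  have := RingHom.ker_isMaximal_of_surjective (cyclotomicLift hζ hh) (ZMod.ringHom_surjective _)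
  exact ⟨h, hh, (this.eq_of_le hq.ne_top hker).symm⟩

end Split

namespace QuadraticConj

section Ramification

variable {R S : Type*} [CommRing R] [CommRing S] [Algebra R S] [FaithfulSMul R S] [IsDomain S]
  (σ : QuadraticConj R S) {a : R} {ω : S}

theorem sub_conj_dvd_sub_conj (hω : (ω - σ.conj ω) ^ 2 = algebraMap R S a) (ha : IsRadical a)
    (ha0 : a ≠ 0) (y : S) : ω - σ.conj ω ∣ y - σ.conj y := by
  obtain ⟨f, hf⟩ := σ.exists_algebraMap_eq ((y - σ.conj y) * (ω - σ.conj ω)) (by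
    simp only [map_mul, map_sub, σ.conj_conj]
    ring)
  obtain ⟨e, he⟩ := σ.exists_algebraMap_eq ((y - σ.conj y) ^ 2) (by
    simp only [map_pow, map_sub, σ.conj_conj]
    ring)
  have hfe : f ^ 2 = a * e := by
    apply FaithfulSMul.algebraMap_injective R S
    rw [map_pow, map_mul, hf, he, ← hω, mul_pow, mul_comm]
  obtain ⟨b, rfl⟩ := ha 2 f (Dvd.intro _ hfe.symm)
  have hne : ω - σ.conj ω ≠ 0 := fun h ↦ ha0 <| by
    rwa [h, zero_pow two_ne_zero, eq_comm,
      map_eq_zero_iff _ (FaithfulSMul.algebraMap_injective R S)] at hω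
  refine ⟨algebraMap R S b, mul_right_cancel₀ hne ?_⟩
  rw [← hf, map_mul, ← hω]
  ring

theorem exists_isRamified_comap_eq_ker [Algebra.IsIntegral R S] {k : Type*} [Field k] {χ : R →+* k}
    (hω : (ω - σ.conj ω) ^ 2 = algebraMap R S a) (ha : IsRadical a) (ha0 : a ≠ 0) (hχ : χ a = 0) :
    ∃ P : Ideal S, P.IsPrime ∧ σ.IsRamified P ∧ P.comap (algebraMap R S) = RingHom.ker χ := by
  have := RingHom.ker_isPrime χ
  obtain ⟨P, -, hP, hcomap⟩ := Ideal.exists_ideal_over_prime_of_isIntegral (RingHom.ker χ)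
    (⊥ : Ideal S) (by
      rw [← RingHom.ker_eq_comap_bot,
        (RingHom.injective_iff_ker_eq_bot _).1 (FaithfulSMul.algebraMap_injective R S)]
      exact bot_le)
  have hmem : ω - σ.conj ω ∈ P := by
    refine hP.mem_of_pow_mem 2 ?_
    rw [hω, ← Ideal.mem_comap, hcomap]
    exact hχ
  exact ⟨P, hP, fun y ↦ P.mem_of_dvd (σ.sub_conj_dvd_sub_conj hω ha ha0 y) hmem, hcomap⟩

end Ramification

section CyclotomicBase

variable {n : ℕ} [NeZero n] {F K : Type*} [Field F] [NumberField F]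
  [IsCyclotomicExtension {n} ℚ F] [Field K] [Algebra F K]
  {p : ℕ} [Fact p.Prime] {g : ZMod p} (σ : QuadraticConj (𝓞 F) (𝓞 K)) {ω : 𝓞 K}

theorem exists_injective_ramifiedPrime (hg : IsPrimitiveRoot g n)
    (hω : (ω - σ.conj ω) ^ 2 = algebraMap (𝓞 F) (𝓞 K) p) :
    ∃ f : σ.RamifiedPrime → primitiveRoots n (ZMod p), Function.Injective f := by
  have hlies (Q : σ.RamifiedPrime) : ∃ h : primitiveRoots n (ZMod p),
      Q.1.asIdeal.comap (algebraMap (𝓞 F) (𝓞 K)) =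
        RingHom.ker (cyclotomicLift (IsCyclotomicExtension.zeta_spec n ℚ F)
          (isPrimitiveRoot_of_mem_primitiveRoots h.2)) := by
    have := Q.1.isPrime
    obtain ⟨h, hh, hker⟩ := exists_eq_ker_cyclotomicLift (IsCyclotomicExtension.zeta_spec n ℚ F) hg
      (q := Q.1.asIdeal.comap (algebraMap (𝓞 F) (𝓞 K))) (by
        rw [Ideal.mem_comap, ← hω]
        exact Ideal.pow_mem_of_mem _ (Q.2 ω) 2 two_pos)
    exact ⟨⟨h, (mem_primitiveRoots (NeZero.pos n)).2 hh⟩, hker⟩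
  choose f hf using hlies
  refine ⟨f, fun Q Q' h ↦ Subtype.ext (IsDedekindDomain.HeightOneSpectrum.ext ?_)⟩
  have := Q.1.isPrime
  have := Q'.1.isPrime
  exact IsRamified.eq_of_comap_eq Q.2 Q'.2 (by rw [hf, hf, h])

theorem finite_ramifiedPrime (hg : IsPrimitiveRoot g n)
    (hω : (ω - σ.conj ω) ^ 2 = algebraMap (𝓞 F) (𝓞 K) p) : Finite σ.RamifiedPrime :=
  have ⟨_, hf⟩ := σ.exists_injective_ramifiedPrime hg hω
  Finite.of_injective _ hf

theorem card_ramifiedPrime_le [Fintype σ.RamifiedPrime] (hg : IsPrimitiveRoot g n)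
    (hω : (ω - σ.conj ω) ^ 2 = algebraMap (𝓞 F) (𝓞 K) p) :
    Fintype.card σ.RamifiedPrime ≤ n.totient := by
  obtain ⟨f, hf⟩ := σ.exists_injective_ramifiedPrime hg hω
  rw [← hg.card_primitiveRoots, ← Fintype.card_coe]
  exact Fintype.card_le_of_injective f hf

theorem isSquare_of_norm_eq_mul_norm [NumberField K] [NeZero (2 : ZMod p)]
    (hg : IsPrimitiveRoot g n) (hω : (ω - σ.conj ω) ^ 2 = algebraMap (𝓞 F) (𝓞 K) p)
    (ψ : 𝓞 F →+* ZMod p) {x : 𝓞 F} {α δ : 𝓞 K} (hδ : δ ≠ 0) (h : σ.norm α = x * σ.norm δ) :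
    IsSquare (ψ x) := by
  have hp0 : (p : 𝓞 F) ≠ 0 := Nat.cast_ne_zero.2 (Fact.out : p.Prime).ne_zero
  obtain ⟨P, hP, hram, hker⟩ := σ.exists_isRamified_comap_eq_ker (χ := ψ) hω
    (isRadical_natCast hg) hp0 (by rw [map_natCast, ZMod.natCast_self])
  exact hram.isSquare_of_norm_eq_mul_norm hker hδ h

end CyclotomicBase

end QuadraticConj

/-! ### Quadratic extensions of `ℚ(ζ₈)` ramified exactly at `p` -/

namespace QuadraticConj

section Witnesses

variable {R S : Type*} [CommRing R] [CommRing S] [Algebra R S] (σ : QuadraticConj R S)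
  {ω : S} {z : R} {p : ℕ}

theorem exists_mul_conjIdeal_eq_span_of_dvd_intCast
    (hω : (ω - σ.conj ω) ^ 2 = algebraMap R S p) {q : ℤ} (hq : IsCoprime q (4 * p))
    {t x : R} (ht : (q : R) ∣ t * t - p) (hx : x ∣ q) :
    ∃ I, I * σ.conjIdeal I = Ideal.span {algebraMap R S x} := by
  refine σ.exists_mul_conjIdeal_eq_span_of_dvd_sq_sub (s := ω - σ.conj ω) (by rw [← sq, hω])
    (by rw [map_sub, σ.conj_conj, neg_sub]) ?_ (hx.trans ht)
  have hcop := hq.map (Int.castRingHom R)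
  simp only [eq_intCast, Int.cast_mul, Int.cast_ofNat, Int.cast_natCast] at hcop
  exact hcop.of_isCoprime_of_dvd_left hx

theorem exists_mul_conjIdeal_eq_span_gaussian [Fact p.Prime] (hp8 : p % 8 = 1)
    (hω : (ω - σ.conj ω) ^ 2 = algebraMap R S p) (hz : z ^ 4 = -1) :
    ∃ x : R, (∃ I, I * σ.conjIdeal I = Ideal.span {algebraMap R S x}) ∧
      ∀ {ψ φ : R →+* ZMod p}, φ z = ψ z ^ 3 → ¬IsSquare (ψ x * φ x) := by
  obtain ⟨q, a, b, n, hab, hcop, hdvd, hq⟩ := exists_sq_add_sq_not_isSquare (p := p) hp8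
  refine ⟨a + b * z ^ 2, σ.exists_mul_conjIdeal_eq_span_of_dvd_intCast hω hcop
    (t := n * (z - z ^ 3)) ?_ ⟨a - b * z ^ 2, ?_⟩, fun {ψ φ} h ↦ ?_⟩
  · have hdvd' := map_dvd (Int.castRingHom R) hdvd
    simp only [eq_intCast] at hdvd'
    push_cast at hdvd'
    convert hdvd' using 1
    linear_combination (n : R) ^ 2 * (z ^ 2 - 2) * hz
  · rw [← hab]
    push_cast
    linear_combination (b : R) ^ 2 * hz
  · have hg : ψ z ^ 4 = -1 := by rw [← map_pow, hz, map_neg, map_one]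
    convert hq using 2
    rw [← hab]
    simp only [map_add, map_mul, map_pow, map_intCast, h]
    push_cast
    linear_combination ((a : ZMod p) * b * ψ z ^ 2 + b ^ 2 * (ψ z ^ 4 - 1)) * hg

theorem exists_mul_conjIdeal_eq_span_sqrt_neg_two [Fact p.Prime] (hp8 : p % 8 = 1)
    (hω : (ω - σ.conj ω) ^ 2 = algebraMap R S p) (hz : z ^ 4 = -1) :
    ∃ (x : R) (q : ℤ), ¬IsSquare (q : ZMod p) ∧
      (∃ I, I * σ.conjIdeal I = Ideal.span {algebraMap R S x}) ∧
      (∃ I, I * σ.conjIdeal I = Ideal.span {algebraMap R S q}) ∧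
      ∀ {ψ φ : R →+* ZMod p},
        (φ z = ψ z ^ 3 → φ x = ψ x) ∧
        (φ z = -ψ z → ψ x * φ x = q) := by
  obtain ⟨q, a, b, n, hab, hcop, hdvd, hq⟩ := exists_sq_add_two_mul_sq_not_isSquare (p := p) hp8
  have ht : (q : R) ∣ n * z ^ 2 * (n * z ^ 2) - p := by
    have hdvd' := map_dvd (Int.castRingHom R) hdvd
    simp only [eq_intCast] at hdvd'
    push_cast at hdvd'
    convert hdvd' using 1
    linear_combination (n : R) ^ 2 * hz
  have hx : a + b * (z + z ^ 3) ∣ (q : R) := ⟨a - b * (z + z ^ 3), by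
    rw [← hab]
    push_cast
    linear_combination (b : R) ^ 2 * (z ^ 2 + 2) * hz⟩
  refine ⟨_, q, hq, σ.exists_mul_conjIdeal_eq_span_of_dvd_intCast hω hcop ht hx,
    σ.exists_mul_conjIdeal_eq_span_of_dvd_intCast hω hcop ht dvd_rfl, fun {ψ φ} ↦ ?_⟩
  have hg : ψ z ^ 4 = -1 := by rw [← map_pow, hz, map_neg, map_one]
  refine ⟨fun h ↦ ?_, fun h ↦ ?_⟩ <;>
    simp only [map_add, map_mul, map_pow, map_intCast, h]
  · linear_combination (b : ZMod p) * (ψ z ^ 5 - ψ z) * hg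
  · rw [← hab]
    push_cast
    linear_combination (b : ZMod p) ^ 2 * (-ψ z ^ 2 - 2) * hg

end Witnesses

end QuadraticConj

section EighthRootField

variable {F K : Type*} [Field F] [NumberField F] [IsCyclotomicExtension {8} ℚ F] [Field K]
  [NumberField K] [Algebra F K] {ζ : F} (hζ : IsPrimitiveRoot ζ 8) {p : ℕ} [Fact p.Prime]

section Units

variable {k : Type*} [CommRing k] {ψ φ : 𝓞 F →+* k}

theorem isSquare_map_unit_mul_of_pow_three
    (h : φ hζ.toInteger = ψ hζ.toInteger ^ 3) (u : (𝓞 F)ˣ) :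
    IsSquare (ψ u * φ u) := by
  have hg : ψ hζ.toInteger ^ 4 = -1 := by rw [← map_pow, toInteger_pow_four, map_neg, map_one]
  refine isSquare_map_unit hζ (χ := (ψ * φ : 𝓞 F →* k)) ⟨ψ hζ.toInteger ^ 2, ?_⟩
    ⟨ψ hζ.toInteger ^ 2, ?_⟩ u <;>
    simp only [MonoidHom.mul_apply, MonoidHom.coe_coe, map_add, map_sub, map_pow, map_one, h]
  · ring
  · linear_combination (ψ hζ.toInteger ^ 8 - ψ hζ.toInteger ^ 6 - ψ hζ.toInteger ^ 5
      - ψ hζ.toInteger ^ 4 + ψ hζ.toInteger + 1) * hg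

theorem isSquare_map_unit_mul_of_neg
    (h : φ hζ.toInteger = -ψ hζ.toInteger) (u : (𝓞 F)ˣ) :
    IsSquare (ψ u * φ u) := by
  have hg : ψ hζ.toInteger ^ 4 = -1 := by rw [← map_pow, toInteger_pow_four, map_neg, map_one]
  refine isSquare_map_unit hζ (χ := (ψ * φ : 𝓞 F →* k)) ⟨ψ hζ.toInteger ^ 3, ?_⟩
    ⟨ψ hζ.toInteger ^ 2, ?_⟩ u <;>
    simp only [MonoidHom.mul_apply, MonoidHom.coe_coe, map_add, map_sub, map_pow, map_one, h]
  · linear_combination -ψ hζ.toInteger ^ 2 * hg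
  · linear_combination (1 - ψ hζ.toInteger ^ 2) * hg

end Units

/-- The group `Cl/Cl²` of a number field, whose dimension over `𝔽₂` is the 2-rank of `Cl`. -/
abbrev ClassGroupModSq (K : Type*) [Field K] : Type _ :=
  ClassGroup (𝓞 K) ⧸ (powMonoidHom 2 : ClassGroup (𝓞 K) →* ClassGroup (𝓞 K)).range

namespace QuadraticConj

variable (σ : QuadraticConj (𝓞 F) (𝓞 K)) {ω : 𝓞 K} {g : ZMod p}

section UpperBound

variable [NeZero (2 : ZMod p)]

theorem card_classGroupModSq_mul_index_le (hK : Module.finrank ℚ K = 8) (hg : g ^ 4 = -1)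
    (hω : (ω - σ.conj ω) ^ 2 = algebraMap (𝓞 F) (𝓞 K) p) {M : Subgroup (𝓞 F)ˣ}
    (hM : ∀ (I : Ideal (𝓞 K)) (u : (𝓞 F)ˣ), σ.IsTwist I u → u ∈ M) :
    Nat.card (ClassGroupModSq K) * M.index ≤ 8 := by
  have : IsPrincipalIdealRing (𝓞 F) := isPrincipalIdealRing_of_isCyclotomicExtension_eight
  have hg8 := isPrimitiveRoot_eight_of_pow_four_eq_neg_one hg
  have := σ.finite_ramifiedPrime hg8 hω
  have := Fintype.ofFinite σ.RamifiedPrime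
  have hram : Fintype.card σ.RamifiedPrime ≤ 4 := σ.card_ramifiedPrime_le hg8 hω
  have hsq := index_sq_units_of_isCyclotomicExtension_eight (F := F)
  have hcard := σ.card_sq_torsion_mul_index_le hM (by rw [hsq]; norm_num)
  rw [relIndex_sq_ker_normUnits_of_finrank_eq_eight hK, hsq, ← Subgroup.index_range] at hcard
  have hpow := Nat.pow_le_pow_right two_pos hram
  change Subgroup.index _ * _ ≤ _
  omega

theorem card_classGroupModSq_le_eight (hK : Module.finrank ℚ K = 8) (hg : g ^ 4 = -1)
    (hω : (ω - σ.conj ω) ^ 2 = algebraMap (𝓞 F) (𝓞 K) p) :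
    Nat.card (ClassGroupModSq K) ≤ 8 := by
  simpa only [Subgroup.index_top, mul_one] using
    σ.card_classGroupModSq_mul_index_le hK hg hω (M := ⊤) fun _ _ _ ↦ Subgroup.mem_top _

theorem card_classGroupModSq_le_four (hK : Module.finrank ℚ K = 8) (hg : g ^ 4 = -1)
    (hω : (ω - σ.conj ω) ^ 2 = algebraMap (𝓞 F) (𝓞 K) p)
    (hsq : ¬(IsSquare g ∧ IsSquare (1 + g - g ^ 3))) :
    Nat.card (ClassGroupModSq K) ≤ 4 := by
  have hg8 := isPrimitiveRoot_eight_of_pow_four_eq_neg_one hg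
  have hζ := IsCyclotomicExtension.zeta_spec 8 ℚ F
  have hz := cyclotomicLift_toInteger hζ hg8
  set ψ := cyclotomicLift hζ hg8
  have hbound := σ.card_classGroupModSq_mul_index_le hK hg hω (M := squareUnits (ψ : 𝓞 F →* ZMod p))
    fun I u ⟨α, δ, hδ, _, h⟩ ↦ σ.isSquare_of_norm_eq_mul_norm hg8 hω ψ hδ h
  have hle := range_powMonoidHom_two_le_squareUnits (ψ : 𝓞 F →* ZMod p)
  have hindex0 : (squareUnits (ψ : 𝓞 F →* ZMod p)).index ≠ 0 := fun h ↦ by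
    have := Subgroup.index_dvd_of_le hle
    rw [h, index_sq_units_of_isCyclotomicExtension_eight] at this
    omega
  have hindex1 : (squareUnits (ψ : 𝓞 F →* ZMod p)).index ≠ 1 := fun h ↦ by
    rw [Subgroup.index_eq_one] at h
    have hz4 := toInteger_pow_four hζ
    have hroot : eighthRootUnit hz4 ∈ squareUnits (ψ : 𝓞 F →* ZMod p) := h ▸ Subgroup.mem_top _
    have hsqrt : onePlusSqrtTwoUnit hz4 ∈ squareUnits (ψ : 𝓞 F →* ZMod p) := h ▸ Subgroup.mem_top _
    rw [mem_squareUnits] at hroot hsqrt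
    exact hsq ⟨by simpa [hz] using hroot, by simpa [hz] using hsqrt⟩
  have : 2 ≤ (squareUnits (ψ : 𝓞 F →* ZMod p)).index := by omega
  nlinarith

end UpperBound

section LowerBound

theorem exists_ringHom_pow_three_neg (hp8 : p % 8 = 1) (hg : g ^ 4 = -1) :
    ∃ ψ₀ ψ₁ ψ₂ : 𝓞 F →+* ZMod p, ψ₀ hζ.toInteger = g ∧
      ψ₁ hζ.toInteger = ψ₀ hζ.toInteger ^ 3 ∧ ψ₂ hζ.toInteger = -ψ₀ hζ.toInteger := by
  have : NeZero (2 : ZMod p) := ⟨two_ne_zero_of_mod_eight_eq_one hp8⟩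
  have hg₁ : (g ^ 3) ^ 4 = -1 := by linear_combination (g ^ 8 - g ^ 4 + 1) * hg
  have hg₂ : (-g) ^ 4 = -1 := by linear_combination hg
  refine ⟨cyclotomicLift hζ (isPrimitiveRoot_eight_of_pow_four_eq_neg_one hg),
    cyclotomicLift hζ (isPrimitiveRoot_eight_of_pow_four_eq_neg_one hg₁),
    cyclotomicLift hζ (isPrimitiveRoot_eight_of_pow_four_eq_neg_one hg₂), ?_, ?_, ?_⟩ <;>
  simp only [cyclotomicLift_toInteger]

theorem exists_triangular_characters (hp8 : p % 8 = 1) (hg : g ^ 4 = -1)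
    (hω : (ω - σ.conj ω) ^ 2 = algebraMap (𝓞 F) (𝓞 K) p) :
    ∃ (χ : Fin 3 → 𝓞 F →* ZMod p) (x : Fin 3 → 𝓞 F),
      (∀ (i : Fin 2) (u : (𝓞 F)ˣ), IsSquare (χ i.castSucc u)) ∧
      (IsSquare g → IsSquare (1 + g - g ^ 3) → ∀ u : (𝓞 F)ˣ, IsSquare (χ (Fin.last 2) u)) ∧
      (∀ i x (α δ : 𝓞 K), δ ≠ 0 → σ.norm α = x * σ.norm δ → IsSquare (χ i x)) ∧
      (∀ i, ∃ I, I * σ.conjIdeal I = Ideal.span {algebraMap (𝓞 F) (𝓞 K) (x i)}) ∧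
      (∀ i, ¬IsSquare (χ i (x i))) ∧
      ∀ i j, i < j → IsSquare (χ i (x j)) ∧ χ i (x j) ≠ 0 := by
  have hζ := IsCyclotomicExtension.zeta_spec 8 ℚ F
  have hz := toInteger_pow_four hζ
  obtain ⟨ψ₀, ψ₁, ψ₂, h₀, h₁, h₂⟩ := exists_ringHom_pow_three_neg hζ hp8 hg
  obtain ⟨x₁, hI₁, hx₁⟩ := σ.exists_mul_conjIdeal_eq_span_gaussian hp8 hω hz
  obtain ⟨x₂, q, hq, hI₂, hI₃, hx₂⟩ := σ.exists_mul_conjIdeal_eq_span_sqrt_neg_two hp8 hω hz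
  have hq0 : (q : ZMod p) ≠ 0 := fun h ↦ hq (h ▸ IsSquare.zero)
  have hx₂0 : ψ₀ x₂ ≠ 0 := left_ne_zero_of_mul ((hx₂.2 h₂).trans_ne hq0)
  have : NeZero (2 : ZMod p) := ⟨two_ne_zero_of_mod_eight_eq_one hp8⟩
  have hnorm (ψ : 𝓞 F →+* ZMod p) (x) (α δ : 𝓞 K) (hδ : δ ≠ 0) (h : σ.norm α = x * σ.norm δ) :=
    σ.isSquare_of_norm_eq_mul_norm (isPrimitiveRoot_eight_of_pow_four_eq_neg_one hg) hω ψ hδ h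
  refine ⟨![ψ₀ * ψ₁, ψ₀ * ψ₂, ψ₀], ![x₁, x₂, q], ?_, fun hsq hsq' ↦ ?_, ?_, ?_, ?_, ?_⟩
  · exact Fin.forall_fin_two.2
      ⟨isSquare_map_unit_mul_of_pow_three hζ h₁, isSquare_map_unit_mul_of_neg hζ h₂⟩
  · exact isSquare_map_unit hζ (χ := (ψ₀ : 𝓞 F →* ZMod p)) (by simpa [h₀] using hsq)
      (by simpa [h₀] using hsq')
  · exact Fin.forall_fin_succ.2
      ⟨fun x α δ hδ h ↦ (hnorm ψ₀ x α δ hδ h).mul (hnorm ψ₁ x α δ hδ h), Fin.forall_fin_two.2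
        ⟨fun x α δ hδ h ↦ (hnorm ψ₀ x α δ hδ h).mul (hnorm ψ₂ x α δ hδ h), hnorm ψ₀⟩⟩
  · exact Fin.forall_fin_succ.2 ⟨hI₁, Fin.forall_fin_two.2 ⟨hI₂, hI₃⟩⟩
  · simp [Fin.forall_fin_succ, hx₁ h₁, hx₂.2 h₂, hq]
  · simp [Fin.forall_fin_succ, hx₂.1 h₁, hx₂0, hq0]

theorem four_le_card_classGroupModSq (hp8 : p % 8 = 1)
    (hω : (ω - σ.conj ω) ^ 2 = algebraMap (𝓞 F) (𝓞 K) p) : 4 ≤ Nat.card (ClassGroupModSq K) := by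
  obtain ⟨g, hg⟩ := exists_pow_four_eq_neg_one hp8
  obtain ⟨χ, x, hunit, -, hnorm, hx, hdiag, htri⟩ := σ.exists_triangular_characters hp8 hg hω
  have : IsPrincipalIdealRing (𝓞 F) := isPrincipalIdealRing_of_isCyclotomicExtension_eight
  exact σ.two_pow_le_card_classGroup_quotient (fun i : Fin 2 ↦ χ i.castSucc) hunit
    (fun i ↦ hnorm i.castSucc) (fun i ↦ hx i.castSucc) (fun i ↦ hdiag i.castSucc)
    fun i j hij ↦ htri i.castSucc j.castSucc (Fin.castSucc_lt_castSucc_iff.2 hij)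

theorem eight_le_card_classGroupModSq (hp8 : p % 8 = 1) (hg : g ^ 4 = -1)
    (hω : (ω - σ.conj ω) ^ 2 = algebraMap (𝓞 F) (𝓞 K) p) (hsq : IsSquare g)
    (hsq' : IsSquare (1 + g - g ^ 3)) : 8 ≤ Nat.card (ClassGroupModSq K) := by
  obtain ⟨χ, x, hunit, hunit', hnorm, hx, hdiag, htri⟩ := σ.exists_triangular_characters hp8 hg hω
  have : IsPrincipalIdealRing (𝓞 F) := isPrincipalIdealRing_of_isCyclotomicExtension_eight
  exact σ.two_pow_le_card_classGroup_quotient χ (Fin.lastCases (hunit' hsq hsq') hunit)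
    hnorm hx hdiag htri

end LowerBound

end QuadraticConj

end EighthRootField

/-! ### The fields `ℚ(ζ₈, √p)` -/

section QuadraticExtension

variable {F K : Type*} [Field F] [Field K] [Algebra F K]

theorem nonempty_quadraticConj [Algebra.IsQuadraticExtension F K] [IsGalois F K] :
    Nonempty (QuadraticConj F K) := by
  have hcard : Nat.card (K ≃ₐ[F] K) = 2 := by
    rw [IsGalois.card_aut_eq_finrank, Algebra.IsQuadraticExtension.finrank_eq_two]
  obtain ⟨τ, hτ, hunique⟩ := (Nat.card_eq_two_iff' (1 : K ≃ₐ[F] K)).1 hcard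
  refine ⟨⟨τ, fun y ↦ ?_, fun y hy ↦ ?_, ?_⟩⟩
  · rw [← AlgEquiv.mul_apply, ← sq, ← hcard, pow_card_eq_one', AlgEquiv.one_apply]
  · refine (IsGalois.mem_range_algebraMap_iff_fixed y).2 fun f ↦ ?_
    rcases eq_or_ne f 1 with rfl | hf
    · rfl
    · rwa [hunique f hf]
  · by_contra! h
    exact hτ (AlgEquiv.ext h)

theorem isQuadraticExtension_adjoin_sqrt {r : K} {a : F} (hr : r ^ 2 = algebraMap F K a)
    (ha : ∀ x : F, x ^ 2 ≠ a) : Algebra.IsQuadraticExtension F F⟮r⟯ := by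
  have hirr := (X_pow_sub_C_irreducible_iff_of_prime Nat.prime_two).2 ha
  have hmonic := Polynomial.monic_X_pow_sub_C a two_ne_zero
  have hroot : Polynomial.aeval r (Polynomial.X ^ 2 - Polynomial.C a) = 0 := by simp [hr]
  refine ⟨?_⟩
  rw [adjoin.finrank ⟨_, hmonic, hroot⟩, ← minpoly.eq_of_irreducible_of_monic hirr hroot hmonic,
    Polynomial.natDegree_X_pow_sub_C]

namespace QuadraticConj

/-- The quadratic extension of rings of integers cut out by a quadratic extension of fields. -/
def ringOfIntegers [NumberField K] (σ : QuadraticConj F K) : QuadraticConj (𝓞 F) (𝓞 K) where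
  conj := RingOfIntegers.mapAlgEquiv σ.conj
  conj_conj y := RingOfIntegers.ext (σ.conj_conj y)
  exists_algebraMap_eq y hy := by
    obtain ⟨x, hx⟩ := σ.exists_algebraMap_eq y (congrArg ((↑) : 𝓞 K → K) hy)
    have hint : IsIntegral ℤ (algebraMap F K x) := hx ▸ y.2
    exact ⟨⟨x, (isIntegral_algebraMap_iff (algebraMap F K).injective).1 hint⟩,
      RingOfIntegers.ext hx⟩
  exists_conj_ne := by
    obtain ⟨y, hy⟩ := σ.exists_conj_ne
    by_contra! hfix
    obtain ⟨a, b, -, rfl⟩ := IsFractionRing.div_surjective (A := 𝓞 K) y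
    have hfix' (c : 𝓞 K) : σ.conj c = c := congrArg ((↑) : 𝓞 K → K) (hfix c)
    exact hy (by rw [map_div₀, hfix', hfix'])

theorem conj_eq_neg_of_sq_eq (σ : QuadraticConj F K) {r : K} {a : F}
    (hr : r ^ 2 = algebraMap F K a) (ha : ∀ x : F, x ^ 2 ≠ a) : σ.conj r = -r := by
  have hsq : σ.conj r ^ 2 = r ^ 2 := by rw [← map_pow, hr, AlgEquiv.commutes]
  refine (sq_eq_sq_iff_eq_or_eq_neg.1 hsq).resolve_left fun hfix ↦ ?_
  obtain ⟨x, rfl⟩ := σ.exists_algebraMap_eq r hfix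
  exact ha x ((algebraMap F K).injective (by rw [map_pow, hr]))

end QuadraticConj

end QuadraticExtension

theorem isIntegral_half_one_add {K : Type*} [Field K] [NeZero (2 : K)] {r : K} {n : ℕ}
    (hn : n % 4 = 1) (hr : r ^ 2 = n) : IsIntegral ℤ ((1 + r) / 2) := by
  obtain ⟨m, rfl⟩ : ∃ m, n = 4 * m + 1 := ⟨n / 4, by omega⟩
  refine ⟨Polynomial.X ^ 2 - Polynomial.X - Polynomial.C (m : ℤ), by monicity!, ?_⟩
  have h2 : (2 : K) ≠ 0 := two_ne_zero
  simp only [Polynomial.eval₂_sub, Polynomial.eval₂_X_pow, Polynomial.eval₂_X,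
    Polynomial.eval₂_natCast, Polynomial.C_eq_natCast]
  push_cast at hr
  field_simp
  linear_combination hr

theorem exists_sq_sub_conj_eq_natCast {F K : Type*} [Field F] [Field K] [Algebra F K]
    [NumberField K] (σ : QuadraticConj F K) {r : K} {n : ℕ} (hn : n % 4 = 1) (hr : r ^ 2 = n)
    (hsq : ∀ x : F, x ^ 2 ≠ n) :
    ∃ ω : 𝓞 K, (ω - σ.ringOfIntegers.conj ω) ^ 2 = algebraMap (𝓞 F) (𝓞 K) n := by
  have hconj : σ.conj r = -r := σ.conj_eq_neg_of_sq_eq (by rw [hr, map_natCast]) hsq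
  refine ⟨⟨(1 + r) / 2, isIntegral_half_one_add hn hr⟩, RingOfIntegers.ext ?_⟩
  change ((1 + r) / 2 - σ.conj ((1 + r) / 2)) ^ 2 = algebraMap F K ((n : 𝓞 F) : F)
  have hdiff : (1 + r) / 2 - σ.conj ((1 + r) / 2) = r := by
    rw [map_div₀, map_add, map_one, map_ofNat, hconj]
    have h2 : (2 : K) ≠ 0 := two_ne_zero
    field_simp
    ring
  simp only [hdiff, hr, map_natCast]

theorem sq_ne_natCast_of_isPrimitiveRoot {n : ℕ} [NeZero n] {F : Type*} [Field F] [NumberField F]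
    [IsCyclotomicExtension {n} ℚ F] {p : ℕ} [Fact p.Prime] {g : ZMod p} (hg : IsPrimitiveRoot g n)
    (x : F) : x ^ 2 ≠ p := by
  intro hx
  have hint : IsIntegral ℤ x := .of_pow two_pos (hx ▸ isIntegral_natCast p)
  obtain ⟨y, hy⟩ : ∃ y : 𝓞 F, y * y = p :=
    ⟨⟨x, hint⟩, RingOfIntegers.ext ((sq x).symm.trans hx)⟩
  have hp0 : (p : 𝓞 F) ≠ 0 := Nat.cast_ne_zero.2 (Fact.out : p.Prime).ne_zero
  have hunit : IsUnit y := (isRadical_natCast hg).squarefree hp0 y (dvd_of_eq hy)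
  have hmap := (hy ▸ hunit.mul hunit).map
    (cyclotomicLift (IsCyclotomicExtension.zeta_spec n ℚ F) hg)
  simp at hmap

section Kstar

/-- The primitive eighth root of unity `(1 + i)/√2`. -/
def zeta8 : ℂ := (Real.sqrt 2 : ℂ) * (1 + I) / 2

theorem sq_sqrt_natCast (n : ℕ) : (Real.sqrt n : ℂ) ^ 2 = n := by
  rw [← ofReal_pow, Real.sq_sqrt n.cast_nonneg, ofReal_natCast]

theorem zeta8_sq : zeta8 ^ 2 = I := by
  have hsqrt : (Real.sqrt 2 : ℂ) ^ 2 = 2 := mod_cast sq_sqrt_natCast 2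
  rw [zeta8]
  linear_combination ((1 + I) ^ 2 / 4) * hsqrt + (1 / 2) * I_sq

theorem zeta8_sub_pow_three : zeta8 - zeta8 ^ 3 = (Real.sqrt 2 : ℂ) := by
  rw [pow_succ, zeta8_sq, zeta8]
  linear_combination (-(Real.sqrt 2 : ℂ) / 2) * I_sq

theorem isPrimitiveRoot_zeta8 : IsPrimitiveRoot zeta8 8 :=
  isPrimitiveRoot_eight_of_pow_four_eq_neg_one (by rw [pow_mul zeta8 2 2, zeta8_sq, I_sq])

theorem kstar_eq_restrictScalars (p : ℕ) :
    kstar p = (ℚ⟮zeta8⟯⟮(Real.sqrt p : ℂ)⟯).restrictScalars ℚ := by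
  refine Eq.trans ?_ (adjoin_adjoin_left ℚ {zeta8} {(Real.sqrt p : ℂ)}).symm
  refine le_antisymm (adjoin_le_iff.2 ?_) (adjoin_le_iff.2 ?_)
  · have hz : zeta8 ∈ adjoin ℚ ({zeta8} ∪ {(Real.sqrt p : ℂ)}) :=
      subset_adjoin _ _ (Or.inl rfl)
    rintro x (rfl | rfl | rfl)
    · exact zeta8_sub_pow_three ▸ sub_mem hz (pow_mem hz 3)
    · exact subset_adjoin _ _ (Or.inr rfl)
    · exact zeta8_sq ▸ pow_mem hz 2
  · rintro x (rfl | rfl)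
    · exact div_mem (mul_mem (subset_adjoin _ _ (by simp)) (add_mem (one_mem _)
        (subset_adjoin _ _ (by simp)))) (ofNat_mem _ 2)
    · exact subset_adjoin _ _ (by simp)

theorem card_classGroupModSq_eq_of_eq_restrictScalars {F A : IntermediateField ℚ ℂ}
    {B : IntermediateField F ℂ} (h : A = B.restrictScalars ℚ) :
    Nat.card (ClassGroupModSq A) = Nat.card (ClassGroupModSq B) := by
  subst h
  rfl

instance : IsCyclotomicExtension {8} ℚ ℚ⟮zeta8⟯ := by
  have hcyc := isPrimitiveRoot_zeta8.adjoin_isCyclotomicExtension ℚ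
  have halg : IsAlgebraic ℚ zeta8 :=
    (isPrimitiveRoot_zeta8.isIntegral (by norm_num)).tower_top.isAlgebraic
  change IsCyclotomicExtension {8} ℚ ℚ⟮zeta8⟯.toSubalgebra
  rwa [adjoin_simple_toSubalgebra_of_isAlgebraic halg]

instance : NumberField ℚ⟮zeta8⟯ := IsCyclotomicExtension.numberField {8} ℚ _

variable {p : ℕ} [Fact p.Prime] {g : ZMod p}

theorem sq_ne_natCast_of_mod_eight_eq_one (hp8 : p % 8 = 1) (x : ℚ⟮zeta8⟯) : x ^ 2 ≠ p := by
  have : NeZero (2 : ZMod p) := ⟨two_ne_zero_of_mod_eight_eq_one hp8⟩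
  obtain ⟨g, hg⟩ := exists_pow_four_eq_neg_one hp8
  exact sq_ne_natCast_of_isPrimitiveRoot (isPrimitiveRoot_eight_of_pow_four_eq_neg_one hg) x

theorem isQuadraticExtension_adjoin_sqrt_natCast (hp8 : p % 8 = 1) :
    Algebra.IsQuadraticExtension ℚ⟮zeta8⟯ ℚ⟮zeta8⟯⟮(Real.sqrt p : ℂ)⟯ :=
  isQuadraticExtension_adjoin_sqrt (by rw [sq_sqrt_natCast, map_natCast])
    (sq_ne_natCast_of_mod_eight_eq_one hp8)

theorem numberField_adjoin_sqrt_natCast (hp8 : p % 8 = 1) :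
    NumberField ℚ⟮zeta8⟯⟮(Real.sqrt p : ℂ)⟯ := by
  have := isQuadraticExtension_adjoin_sqrt_natCast hp8
  exact { to_charZero := inferInstance
          to_finiteDimensional := FiniteDimensional.trans ℚ ℚ⟮zeta8⟯ _ }

theorem exists_quadraticConj_sq_sub_conj_eq (hp8 : p % 8 = 1) :
    ∃ (σ : QuadraticConj (𝓞 ℚ⟮zeta8⟯) (𝓞 ℚ⟮zeta8⟯⟮(Real.sqrt p : ℂ)⟯))
      (ω : 𝓞 ℚ⟮zeta8⟯⟮(Real.sqrt p : ℂ)⟯),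
      (ω - σ.conj ω) ^ 2 = algebraMap (𝓞 ℚ⟮zeta8⟯) _ p := by
  have := isQuadraticExtension_adjoin_sqrt_natCast hp8
  have := numberField_adjoin_sqrt_natCast hp8
  obtain ⟨σ⟩ := nonempty_quadraticConj (F := ℚ⟮zeta8⟯) (K := ℚ⟮zeta8⟯⟮(Real.sqrt p : ℂ)⟯)
  exact ⟨σ.ringOfIntegers, exists_sq_sub_conj_eq_natCast σ (r := AdjoinSimple.gen _ _)
    (by omega) (Subtype.ext (sq_sqrt_natCast p)) (sq_ne_natCast_of_mod_eight_eq_one hp8)⟩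

theorem finrank_adjoin_sqrt_natCast (hp8 : p % 8 = 1) :
    Module.finrank ℚ ℚ⟮zeta8⟯⟮(Real.sqrt p : ℂ)⟯ = 8 := by
  have := isQuadraticExtension_adjoin_sqrt_natCast hp8
  rw [← Module.finrank_mul_finrank ℚ ℚ⟮zeta8⟯, IsCyclotomicExtension.Rat.finrank 8,
    Algebra.IsQuadraticExtension.finrank_eq_two ℚ⟮zeta8⟯]
  decide

theorem card_clModSq_eq_ite (hp8 : p % 8 = 1) (hg : g ^ 4 = -1)
    [Decidable (IsSquare g ∧ IsSquare (1 + g - g ^ 3))] :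
    Nat.card (clModSq p) = if IsSquare g ∧ IsSquare (1 + g - g ^ 3) then 8 else 4 := by
  have : NeZero (2 : ZMod p) := ⟨two_ne_zero_of_mod_eight_eq_one hp8⟩
  have := numberField_adjoin_sqrt_natCast hp8
  have hdeg := finrank_adjoin_sqrt_natCast hp8
  obtain ⟨σ, ω, hω⟩ := exists_quadraticConj_sq_sub_conj_eq hp8
  have hkstar : Nat.card (clModSq p) = Nat.card (ClassGroupModSq ℚ⟮zeta8⟯⟮(Real.sqrt p : ℂ)⟯) :=
    card_classGroupModSq_eq_of_eq_restrictScalars (kstar_eq_restrictScalars p)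
  rw [hkstar]
  split_ifs with hsq
  · exact (σ.card_classGroupModSq_le_eight hdeg hg hω).antisymm
      (σ.eight_le_card_classGroupModSq hp8 hg hω hsq.1 hsq.2)
  · exact (σ.card_classGroupModSq_le_four hdeg hg hω hsq).antisymm
      (σ.four_le_card_classGroupModSq hp8 hω)

end Kstar

theorem statement_16 (p : ℕ) (hp : p.Prime) (hp8 : p % 8 = 1) :
    (Nat.card (clModSq p) = 2 ^ 2 ∨ Nat.card (clModSq p) = 2 ^ 3) ∧
    (Nat.card (clModSq p) = 2 ^ 3 ↔
      ((2 : ZMod p) ^ ((p - 1) / 4) = 1 ∧ (-1 : ℤ) ^ ((p - 1) / 8) = 1)) := by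
  classical
  have : Fact p.Prime := ⟨hp⟩
  obtain ⟨g, hg⟩ := exists_pow_four_eq_neg_one (p := p) hp8
  rw [biquadratic_symbols_eq_one_iff hp8 hg, card_clModSq_eq_ite hp8 hg]
  split_ifs with hsq
  · exact ⟨Or.inr rfl, iff_of_true rfl hsq⟩
  · exact ⟨Or.inl rfl, iff_of_false (by norm_num) hsq⟩
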